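/- Let k ≥ 0 be an integer and let G be a simple graph of order n ≥ max{6k+17, (k+4)(k+5)/2} with e(G) ≥ C(n−k−2, 2) + C(k+3, 2). Then G is weakly pancyclic with girth 3. Moreover, if G contains no cycle of length n−k, then one of the following holds: (a) G is a subgraph of some member of the family F_{n,k+1}; (b) G is isomorphic to L_{n,k+2} = K_1 ∨ (K_{n−k−3} + K_{k+2}); (c) k = 0 and G is a subgraph of Γ_{n,2} = K_2 ∨ (K_{n−4} + 2K_1); (d) k = 1 and G is isomorphic to Γ_{n,3} = K_2 ∨ (K_{n−5} + 3K_1). -/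

import Mathlib

open SimpleGraph

/-- `G` contains a cycle of length `l`. -/
def HasCycleLen {V : Type} (G : SimpleGraph V) (l : ℕ) : Prop :=
  ∃ (v : V) (c : G.Walk v v), c.IsCycle ∧ c.length = l

/-- The circumference of `G`: the length of a longest cycle. -/
noncomputable def circumference {V : Type} (G : SimpleGraph V) : ℕ :=
  sSup {l | HasCycleLen G l}

/-- `G` is weakly pancyclic with girth 3: it contains a cycle of every length `l`
with `3 ≤ l ≤ c(G)`. -/
def WeaklyPancyclic3 {V : Type} (G : SimpleGraph V) : Prop :=
  HasCycleLen G 3 ∧ ∀ l : ℕ, 3 ≤ l → l ≤ circumference G → HasCycleLen G l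

/-- The number of edges of `G`. -/
noncomputable def edgeCount {V : Type} (G : SimpleGraph V) : ℕ :=
  Nat.card G.edgeSet

/-- The degree of `v` in `G`. -/
noncomputable def degCount {V : Type} (G : SimpleGraph V) (v : V) : ℕ :=
  Nat.card (G.neighborSet v)

/-- The spectral radius of `G`: the largest eigenvalue of the adjacency matrix. -/
noncomputable def specRad {V : Type} [Finite V] (G : SimpleGraph V) : ℝ :=
  letI := Fintype.ofFinite V
  letI := Classical.decEq V
  letI := Classical.decRel G.Adj
  sSup (spectrum ℝ (G.adjMatrix ℝ))

/-- The signless Laplacian spectral radius of `G`: the largest eigenvalue of `D(G) + A(G)`. -/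
noncomputable def qSpecRad {V : Type} [Finite V] (G : SimpleGraph V) : ℝ :=
  letI := Fintype.ofFinite V
  letI := Classical.decEq V
  letI := Classical.decRel G.Adj
  sSup (spectrum ℝ (Matrix.diagonal (fun v => (degCount G v : ℝ)) + G.adjMatrix ℝ))

/-- `L_{n,k} = K_1 ∨ (K_{n-k-1} + K_k)`: vertex `0` is the common vertex of a clique on
the `n - k` vertices `{0, …, n-k-1}` and a clique on the `k+1` vertices `{0} ∪ {n-k, …, n-1}`. -/
def Lgraph (n k : ℕ) : SimpleGraph (Fin n) :=
  SimpleGraph.fromRel (fun u v =>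
    u.val = 0 ∨ v.val = 0 ∨ (u.val < n - k ∧ v.val < n - k) ∨
      (n - k ≤ u.val ∧ n - k ≤ v.val))

/-- `Γ_{n,t} = K_2 ∨ (K_{n-2-t} + t·K_1)`: vertices `0,1` are joined to everything,
vertices `2, …, n-t-1` form a clique, and vertices `n-t, …, n-1` are independent. -/
def GammaGraph (n t : ℕ) : SimpleGraph (Fin n) :=
  SimpleGraph.fromRel (fun u v =>
    u.val < 2 ∨ v.val < 2 ∨ (u.val < n - t ∧ v.val < n - t))

/-- `F` is a member of the family `F_{n,k}`: there is a clique `K` on `n - k` vertices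
such that each connected component of `F - K` is a clique all of whose vertices are
adjacent to one single common vertex of `K` and to no other vertex of `K`. -/
def MemF (n k : ℕ) (F : SimpleGraph (Fin n)) : Prop :=
  ∃ K : Finset (Fin n), K.card = n - k ∧ F.IsClique (↑K : Set (Fin n)) ∧
    (∀ u v : ({x : Fin n | x ∉ K} : Set (Fin n)),
      (F.induce {x : Fin n | x ∉ K}).Reachable u v → (u = v ∨ F.Adj u.1 v.1)) ∧
    (∀ u : ({x : Fin n | x ∉ K} : Set (Fin n)), ∃! w : Fin n, w ∈ K ∧ F.Adj u.1 w) ∧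
    (∀ u v : ({x : Fin n | x ∉ K} : Set (Fin n)),
      (F.induce {x : Fin n | x ∉ K}).Reachable u v →
        ∀ w ∈ K, F.Adj u.1 w → F.Adj v.1 w)

/-- `G` is a subgraph of `H` (up to relabelling): there is an injective graph
homomorphism from `G` to `H`. -/
def IsSubgraphOf {n : ℕ} (G H : SimpleGraph (Fin n)) : Prop :=
  ∃ f : G →g H, Function.Injective f

/-!
Put `r = k + 2` and `s = n - k - 3`. The hypothesis on the number of edges says that at most
`r * s` pairs of vertices are nonadjacent. A vertex of degree at most `r` lies in at least `s` such
pairs, so deleting vertices of low degree one at a time leaves, for some `t ≤ r`, a set of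
`t + s + 1` vertices with at most `t * s` nonadjacent pairs and minimum degree at least `t + 1`. The
crossing-chord argument of Ore and Pósa then gives a cycle through all vertices of this set, and
Bondy's version of the same argument shows that a Hamiltonian graph with this many edges is
pancyclic.

If there is no cycle of length `n - k = s + 3`, then there is no longer cycle either, so `t ≤ 1`. If
`t = 0`, the set is a clique on `s + 1` vertices. Either some vertex outside has two neighbours in
it and can be added to it, or every outside vertex has at most one, and counting nonadjacent pairs
gives `L_{n,k+2}`. So consider a set of `s + 2` vertices with at most `s` nonadjacent pairs and
minimum degree two. A path outside it attached at two vertices that are joined by a Hamilton path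
of the set would give a cycle that is too long. The only obstruction to such Hamilton paths is a
vertex of degree two in the set, and then counting nonadjacent pairs once more forces the structure
of `Γ_{n,2}` or `Γ_{n,3}`. Otherwise every outside path attaches at a single vertex, which is case
(a).
-/

section Counting

open Finset

lemma choose_two_add (a b : ℕ) : (a + b).choose 2 = a.choose 2 + b.choose 2 + a * b := by
  induction b with
  | zero => simp
  | succ b ih =>
    rw [← add_assoc, Nat.choose_succ_succ' _ 1, Nat.choose_succ_succ' b 1, ih]
    simp only [Nat.choose_one_right]
    ring

lemma two_mul_choose_two_add (n : ℕ) : 2 * n.choose 2 + n = n * n := by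
  induction n with
  | zero => rfl
  | succ n ih =>
    rw [Nat.choose_succ_succ' n 1, Nat.choose_one_right]
    linarith

variable {V : Type*} {G : SimpleGraph V} {A B D T W : Finset V} {d r s : ℕ} {u v : V}

/-- The neighbours of `v` inside `W`. -/
noncomputable def nbrsOn (G : SimpleGraph V) (W : Finset V) (v : V) : Finset V :=
  open Classical in {w ∈ W | G.Adj v w}

/-- The edges of `G` with both ends in `W`. The pairs of `W` missing from `G` are counted as
`edgesOn Gᶜ W`. -/
noncomputable def edgesOn (G : SimpleGraph V) (W : Finset V) : Finset (Sym2 V) :=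
  open Classical in {e ∈ W.sym2 | e ∈ G.edgeSet}

lemma mem_nbrsOn : u ∈ nbrsOn G W v ↔ u ∈ W ∧ G.Adj v u := by
  simp [nbrsOn]

lemma mem_edgesOn {e : Sym2 V} : e ∈ edgesOn G W ↔ e ∈ W.sym2 ∧ e ∈ G.edgeSet := by
  simp [edgesOn]

lemma nbrsOn_subset (G : SimpleGraph V) (W : Finset V) (v : V) : nbrsOn G W v ⊆ W :=
  fun _ h => (mem_nbrsOn.1 h).1

lemma nbrsOn_mono (h : D ⊆ W) (v : V) : nbrsOn G D v ⊆ nbrsOn G W v := fun _ hx =>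
  mem_nbrsOn.2 ⟨h (mem_nbrsOn.1 hx).1, (mem_nbrsOn.1 hx).2⟩

lemma edgesOn_mono (h : D ⊆ W) : edgesOn G D ⊆ edgesOn G W := fun _ he =>
  mem_edgesOn.2 ⟨sym2_mono h (mem_edgesOn.1 he).1, (mem_edgesOn.1 he).2⟩

lemma isClique_of_card_edgesOn_compl_eq_zero (h : #(edgesOn Gᶜ W) = 0) : G.IsClique W := by
  intro x hx y hy hxy
  by_contra hadj
  have hmem : s(x, y) ∈ edgesOn Gᶜ W :=
    mem_edgesOn.2 ⟨mk_mem_sym2_iff.2 ⟨hx, hy⟩, hxy, hadj⟩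
  rw [card_eq_zero.1 h] at hmem
  exact notMem_empty _ hmem

lemma nbrsOn_insert_self [DecidableEq V] (G : SimpleGraph V) (W : Finset V) (v : V) :
    nbrsOn G (insert v W) v = nbrsOn G W v := by
  ext w
  simp only [mem_nbrsOn, mem_insert]
  exact ⟨fun h => ⟨h.1.resolve_left h.2.ne', h.2⟩, fun h => ⟨.inr h.1, h.2⟩⟩

lemma card_nbrsOn_union [DecidableEq V] (G : SimpleGraph V) (h : Disjoint A B) (v : V) :
    #(nbrsOn G (A ∪ B) v) = #(nbrsOn G A v) + #(nbrsOn G B v) := by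
  rw [← card_union_of_disjoint (h.mono (nbrsOn_subset ..) (nbrsOn_subset ..))]
  congr 1
  ext w
  simp only [mem_nbrsOn, mem_union, or_and_right]

lemma card_nbrsOn_add_card_nbrsOn_compl (G : SimpleGraph V) (hv : v ∈ W) :
    #(nbrsOn G W v) + #(nbrsOn Gᶜ W v) + 1 = #W := by
  classical
  have hdisj : Disjoint (nbrsOn G W v) (nbrsOn Gᶜ W v) := by
    simp +contextual [Finset.disjoint_left, mem_nbrsOn]
  rw [← card_union_of_disjoint hdisj, ← card_erase_add_one hv]
  congr 2
  ext w
  simp only [mem_union, mem_nbrsOn, compl_adj, mem_erase, ne_comm (a := w)]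
  by_cases h : G.Adj v w
  · simp [h, h.ne]
  · simp [h, and_comm]

lemma card_edgesOn_insert [DecidableEq V] (G : SimpleGraph V) (hv : v ∉ W) :
    #(edgesOn G (insert v W)) = #(edgesOn G W) + #(nbrsOn G W v) := by
  have hsplit : edgesOn G (insert v W) = edgesOn G W ∪ (nbrsOn G W v).image (s(v, ·)) := by
    ext e
    induction e with | _ x y
    simp only [mem_edgesOn, mk_mem_sym2_iff, mem_insert, mem_union, mem_image, mem_nbrsOn,
      mem_edgeSet, Sym2.eq_iff]
    constructor
    · rintro ⟨⟨rfl | hx, rfl | hy⟩, hxy⟩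
      · exact (hxy.ne rfl).elim
      · exact .inr ⟨y, ⟨hy, hxy⟩, .inl ⟨rfl, rfl⟩⟩
      · exact .inr ⟨x, ⟨hx, hxy.symm⟩, .inr ⟨rfl, rfl⟩⟩
      · exact .inl ⟨⟨hx, hy⟩, hxy⟩
    · rintro (⟨⟨hx, hy⟩, hxy⟩ | ⟨z, ⟨hz, hvz⟩, ⟨rfl, rfl⟩ | ⟨rfl, rfl⟩⟩)
      exacts [⟨⟨.inr hx, .inr hy⟩, hxy⟩, ⟨⟨.inl rfl, .inr hz⟩, hvz⟩,
        ⟨⟨.inr hz, .inl rfl⟩, hvz.symm⟩]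
  rw [hsplit, card_union_of_disjoint, card_image_of_injective _ fun _ _ => Sym2.congr_right.1]
  simp only [Finset.disjoint_left, mem_edgesOn, mem_image, not_exists]
  rintro e ⟨he, -⟩ z ⟨-, rfl⟩
  exact hv (mk_mem_sym2_iff.1 he).1

lemma card_edgesOn_erase [DecidableEq V] (G : SimpleGraph V) (hv : v ∈ W) :
    #(edgesOn G W) = #(edgesOn G (W.erase v)) + #(nbrsOn G W v) := by
  conv_lhs => rw [← insert_erase hv]
  conv_rhs => rw [← insert_erase hv, nbrsOn_insert_self, erase_insert (notMem_erase v W)]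
  exact card_edgesOn_insert G (notMem_erase v W)

lemma card_edgesOn_union [DecidableEq V] (G : SimpleGraph V) (h : Disjoint A B) :
    #(edgesOn G (A ∪ B)) = #(edgesOn G A) + #(edgesOn G B) + ∑ v ∈ B, #(nbrsOn G A v) := by
  induction B using Finset.induction with
  | empty => simp [edgesOn]
  | insert b B hb ih =>
    rw [disjoint_insert_right] at h
    rw [union_insert, card_edgesOn_insert G (by simp [h.1, hb]), card_nbrsOn_union G h.2, ih h.2,
      sum_insert hb, card_edgesOn_insert G hb]
    ring

lemma card_edgesOn_add_card_edgesOn_compl (G : SimpleGraph V) (W : Finset V) :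
    #(edgesOn G W) + #(edgesOn Gᶜ W) = (#W).choose 2 := by
  classical
  induction W using Finset.induction with
  | empty => simp [edgesOn]
  | insert v W hv ih =>
    have hdeg := card_nbrsOn_add_card_nbrsOn_compl G (mem_insert_self v W)
    simp only [nbrsOn_insert_self, card_insert_of_notMem hv] at hdeg
    rw [card_edgesOn_insert G hv, card_edgesOn_insert Gᶜ hv, card_insert_of_notMem hv,
      Nat.choose_succ_succ' _ 1, Nat.choose_one_right, ← ih]
    omega

lemma card_edgesOn_le_of_card_nbrsOn_le (hT : T ⊆ W) (hd : ∀ v ∈ T, #(nbrsOn G W v) ≤ d) :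
    #(edgesOn G W) ≤ (#W - #T).choose 2 + #T * d := by
  classical
  induction T using Finset.induction generalizing W with
  | empty => simpa using (card_edgesOn_add_card_edgesOn_compl G W).le.trans' (Nat.le_add_right ..)
  | insert t T ht ih =>
    have hsub : T ⊆ W.erase t := fun x hx =>
      mem_erase.2 ⟨fun e => ht (e ▸ hx), hT (mem_insert_of_mem hx)⟩
    have hrest := ih hsub fun v hv =>
      (card_le_card (nbrsOn_mono (erase_subset ..) v)).trans (hd v (mem_insert_of_mem hv))
    have htd := hd t (mem_insert_self ..)
    have htW := hT (mem_insert_self t T)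
    rw [card_edgesOn_erase G htW, card_insert_of_notMem ht]
    rw [card_erase_of_mem htW, Nat.sub_sub, Nat.add_comm 1] at hrest
    linarith

lemma card_le_card_nbrsOn_add_missing (G : SimpleGraph V) (hv : v ∈ W) :
    #W ≤ #(nbrsOn G W v) + #(edgesOn Gᶜ W) + 1 := by
  classical
  have := card_nbrsOn_add_card_nbrsOn_compl G hv
  have := card_edgesOn_erase Gᶜ hv
  omega

lemma sum_card_nbrsOn (G : SimpleGraph V) (W : Finset V) :
    ∑ v ∈ W, #(nbrsOn G W v) = 2 * #(edgesOn G W) := by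
  classical
  induction W using Finset.induction_on with
  | empty => simp [edgesOn]
  | @insert v W hv ih =>
    have hstep : ∀ x ∈ W, #(nbrsOn G (insert v W) x) =
        #(nbrsOn G W x) + if x ∈ nbrsOn G W v then 1 else 0 := by
      intro x hx
      rw [insert_eq, union_comm, card_nbrsOn_union G (disjoint_singleton_right.2 hv)]
      by_cases hxv : G.Adj x v <;>
        simp [nbrsOn, filter_singleton, G.adj_comm v, hx, hxv]
    rw [sum_insert hv, sum_congr rfl hstep, sum_add_distrib, ih, card_edgesOn_insert G hv,
      nbrsOn_insert_self, sum_boole, filter_mem_eq_inter, inter_eq_right.2 (nbrsOn_subset G W v)]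
    push_cast
    ring

lemma card_nbrsOn_add_lt_of_nonadj (hT : T ⊆ W) (hcard : #T = #(nbrsOn G W u)) (hv : v ∈ W)
    (hvT : v ∉ T) (hnadj : ∀ x ∈ T, ¬ G.Adj v x) : #(nbrsOn G W u) + #(nbrsOn G W v) < #W := by
  classical
  have hdisj : Disjoint (insert v T) (nbrsOn G W v) := by
    simp only [Finset.disjoint_left, mem_insert, mem_nbrsOn, not_and]
    rintro x (rfl | hx) -
    exacts [G.irrefl, hnadj x hx]
  have hsub := card_le_card (union_subset (insert_subset hv hT) (nbrsOn_subset G W v))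
  rw [card_union_of_disjoint hdisj, card_insert_of_notMem hvT] at hsub
  omega

lemma exists_nonadj_max_degree_sum (h : ¬ G.IsClique W) :
    ∃ u ∈ W, ∃ v ∈ W, u ≠ v ∧ ¬ G.Adj u v ∧ #(nbrsOn G W u) ≤ #(nbrsOn G W v) ∧
      ∀ x ∈ W, x ≠ v → ¬ G.Adj v x → #(nbrsOn G W x) ≤ #(nbrsOn G W u) := by
  classical
  let P : Finset (V × V) := {x ∈ W ×ˢ W | x.1 ≠ x.2 ∧ ¬ G.Adj x.1 x.2}
  have hP : ∀ x y, (x, y) ∈ P ↔ (x ∈ W ∧ y ∈ W) ∧ x ≠ y ∧ ¬ G.Adj x y := by simp [P]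
  have hne : P.Nonempty := by
    simp only [IsClique, Set.Pairwise, mem_coe, not_forall] at h
    obtain ⟨x, hx, y, hy, hxy, hadj⟩ := h
    exact ⟨(x, y), (hP x y).2 ⟨⟨hx, hy⟩, hxy, hadj⟩⟩
  obtain ⟨⟨u, v⟩, huv, hmax⟩ :=
    P.exists_max_image (fun x => #(nbrsOn G W x.1) + #(nbrsOn G W x.2)) hne
  simp only [Prod.forall, hP] at huv hmax
  obtain ⟨⟨hu, hv⟩, hne, hadj⟩ := huv
  rcases le_total #(nbrsOn G W u) #(nbrsOn G W v) with hle | hle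
  · refine ⟨u, hu, v, hv, hne, hadj, hle, fun x hx hxv hvx => ?_⟩
    have := hmax x v ⟨⟨hx, hv⟩, hxv, fun e => hvx e.symm⟩
    omega
  · refine ⟨v, hv, u, hu, hne.symm, fun e => hadj e.symm, hle, fun x hx hxu hux => ?_⟩
    have := hmax u x ⟨⟨hu, hx⟩, hxu.symm, hux⟩
    omega

lemma card_edgesOn_compl_erase_le [DecidableEq V] (hW : #W = r + 1 + s + 1)
    (hmiss : #(edgesOn Gᶜ W) ≤ (r + 1) * s) (hv : v ∈ W) (hdeg : #(nbrsOn G W v) ≤ r + 1) :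
    #(edgesOn Gᶜ (W.erase v)) ≤ r * s := by
  have h1 := card_edgesOn_erase Gᶜ hv
  have h2 := card_nbrsOn_add_card_nbrsOn_compl G hv
  rw [add_mul] at hmiss
  lia

lemma exists_subset_min_degree (hs : 1 ≤ s) (hW : #W = r + s + 1)
    (hmiss : #(edgesOn Gᶜ W) ≤ r * s) :
    ∃ t ≤ r, ∃ H ⊆ W, #H = t + s + 1 ∧ #(edgesOn Gᶜ H) ≤ t * s ∧
      ∀ v ∈ H, t + 1 ≤ #(nbrsOn G H v) := by
  classical
  induction r generalizing W with
  | zero =>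
    refine ⟨0, le_rfl, W, Subset.rfl, hW, hmiss, fun v hv => ?_⟩
    have := card_le_card_nbrsOn_add_missing G hv
    lia
  | succ r ih =>
    by_cases hdeg : ∀ v ∈ W, r + 2 ≤ #(nbrsOn G W v)
    · exact ⟨r + 1, le_rfl, W, Subset.rfl, hW, hmiss, hdeg⟩
    push Not at hdeg
    obtain ⟨v, hv, hdeg⟩ := hdeg
    obtain ⟨t, ht, H, hH, h⟩ := ih (W := W.erase v) (by rw [card_erase_of_mem hv]; lia)
      (card_edgesOn_compl_erase_le hW hmiss hv (by lia))
    exact ⟨t, ht.trans r.le_succ, H, hH.trans (erase_subset v W), h⟩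

end Counting

section PathsAndCycles

open Finset

variable {V : Type*} {G : SimpleGraph V} {W D : Finset V} {p q u v : V}

/-- `f 0, f 1, …, f m` enumerates, in order, a path of `G` with vertex set `W`. -/
structure PathEnum (G : SimpleGraph V) (W : Finset V) (m : ℕ) (f : ℕ → V) : Prop where
  adj : ∀ i < m, G.Adj (f i) (f (i + 1))
  inj : ∀ i ≤ m, ∀ j ≤ m, f i = f j → i = j
  mem_iff : ∀ x, x ∈ W ↔ ∃ i ≤ m, f i = x

lemma PathEnum.mem {m : ℕ} {f : ℕ → V} (h : PathEnum G W m f) {i : ℕ} (hi : i ≤ m) :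
    f i ∈ W :=
  (h.mem_iff _).2 ⟨i, hi, rfl⟩

lemma PathEnum.sum_eq {m : ℕ} {f : ℕ → V} (h : PathEnum G W m f) (g : V → ℕ) :
    ∑ v ∈ W, g v = ∑ i ∈ range (m + 1), g (f i) := by
  refine (sum_nbij f (fun i hi => h.mem ?_) (fun i hi j hj => h.inj i ?_ j ?_) (fun x hx => ?_)
    fun _ _ => rfl).symm
  · simpa [Nat.lt_succ_iff] using hi
  · simpa [Nat.lt_succ_iff] using hi
  · simpa [Nat.lt_succ_iff] using hj
  · simpa [Nat.lt_succ_iff] using (h.mem_iff x).1 hx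

lemma PathEnum.card_eq {m : ℕ} {f : ℕ → V} (h : PathEnum G W m f) : #W = m + 1 := by
  simpa using h.sum_eq 1

variable [DecidableEq V]

/-- `PathOn G W p q`: there is a path of `G` from `p` to `q` whose vertex set is exactly `W`. -/
inductive PathOn (G : SimpleGraph V) : Finset V → V → V → Prop
  | single (v : V) : PathOn G {v} v v
  | cons {W : Finset V} {p q u : V} (hup : G.Adj u p) (hu : u ∉ W) (h : PathOn G W p q) :
      PathOn G (insert u W) u q

namespace PathOn

lemma left_mem (h : PathOn G W p q) : p ∈ W := by
  cases h <;> simp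

lemma right_mem (h : PathOn G W p q) : q ∈ W := by
  induction h <;> simp_all

lemma append (h : PathOn G W p q) (h' : PathOn G D u v) (hWD : Disjoint W D) (hqu : G.Adj q u) :
    PathOn G (W ∪ D) p v := by
  induction h with
  | single w => exact cons hqu (by simpa using hWD) h'
  | cons hup hu _ ih =>
    rw [disjoint_insert_left] at hWD
    rw [insert_union]
    exact cons hup (by simp [hu, hWD.1]) (ih hWD.2 hqu)

lemma symm (h : PathOn G W p q) : PathOn G W q p := by
  induction h with
  | single w => exact single w
  | @cons W p q u hup hu _ ih =>
    rw [insert_eq, union_comm]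
    exact ih.append (single u) (by simpa using hu) hup.symm

lemma mono {G' : SimpleGraph V} (h : PathOn G W p q)
    (hG : ∀ x ∈ W, ∀ y ∈ W, G.Adj x y → G'.Adj x y) : PathOn G' W p q := by
  induction h with
  | single w => exact single w
  | cons hup hu h ih =>
    exact cons (hG _ (mem_insert_self ..) _ (mem_insert_of_mem h.left_mem) hup) hu
      (ih fun x hx y hy => hG x (mem_insert_of_mem hx) y (mem_insert_of_mem hy))

lemma pair (h : G.Adj u v) : PathOn G {u, v} u v :=
  cons h (by simpa using h.ne) (single v)

lemma uncons (h : PathOn G W p q) (hW : 2 ≤ #W) :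
    ∃ r, G.Adj p r ∧ PathOn G (W.erase p) r q := by
  cases h with
  | single => simp at hW
  | cons hup hu h => exact ⟨_, hup, by rwa [erase_insert hu]⟩

lemma ne (h : PathOn G W p q) (hW : 2 ≤ #W) : p ≠ q := by
  obtain ⟨r, -, hr⟩ := h.uncons hW
  exact (ne_of_mem_erase hr.right_mem).symm

lemma of_walk (w : G.Walk u v) (hw : w.IsPath) : PathOn G w.support.toFinset u v := by
  induction w with
  | nil => simpa using single _
  | cons h p ih =>
    rw [Walk.cons_isPath_iff] at hw
    simpa using cons h (by simpa using hw.2) (ih hw.1)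

lemma exists_walk (h : PathOn G W p q) :
    ∃ w : G.Walk p q, w.IsPath ∧ w.support.toFinset = W := by
  induction h with
  | single w => exact ⟨.nil, by simp, by simp⟩
  | cons hup hu _ ih =>
    obtain ⟨w, hw, rfl⟩ := ih
    exact ⟨.cons hup w, (Walk.cons_isPath_iff ..).2 ⟨hw, by simpa using hu⟩, by simp⟩

end PathOn

lemma PathOn.exists_enum (h : PathOn G W p q) : ∃ m f, PathEnum G W m f ∧ f 0 = p ∧ f m = q := by
  induction h with
  | single w => exact ⟨0, fun _ => w, ⟨by simp, by simp, by simp [eq_comm]⟩, rfl, rfl⟩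
  | @cons W p q u hup hu h ih =>
    obtain ⟨m, f, hf, rfl, rfl⟩ := ih
    have hne : ∀ j ≤ m, u ≠ f j := fun j hj e => hu ((hf.mem_iff u).2 ⟨j, hj, e.symm⟩)
    refine ⟨m + 1, fun i => Nat.casesOn i u f, ⟨?_, ?_, fun x => ?_⟩, rfl, rfl⟩
    · rintro (_ | i) hi
      · exact hup
      · exact hf.adj i (by omega)
    · rintro (_ | i) hi (_ | j) hj e
      · rfl
      · exact absurd e (hne j (by omega))
      · exact absurd e.symm (hne i (by omega))
      · simpa using hf.inj i (by omega) j (by omega) e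
    · rw [mem_insert, hf.mem_iff]
      constructor
      · rintro (rfl | ⟨i, hi, rfl⟩)
        · exact ⟨0, by omega, rfl⟩
        · exact ⟨i + 1, by omega, rfl⟩
      · rintro ⟨_ | i, hi, rfl⟩
        · exact Or.inl rfl
        · exact Or.inr ⟨i, by omega, rfl⟩

namespace PathEnum

variable {m : ℕ} {f : ℕ → V}

lemma image_Icc (h : PathEnum G W m f) : (Icc 0 m).image f = W := by
  ext x
  simp [h.mem_iff]

lemma card_segment (h : PathEnum G W m f) (a : ℕ) {b : ℕ} (hb : b ≤ m) :
    #((Icc a b).image f) = b + 1 - a := by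
  rw [card_image_of_injOn, Nat.card_Icc]
  intro i hi j hj e
  rw [coe_Icc, Set.mem_Icc] at hi hj
  exact h.inj i (by omega) j (by omega) e

lemma disjoint_segments (h : PathEnum G W m f) (a : ℕ) {b c d : ℕ} (hbc : b < c) (hd : d ≤ m) :
    Disjoint ((Icc a b).image f) ((Icc c d).image f) := by
  simp only [Finset.disjoint_left, mem_image, mem_Icc, not_exists]
  rintro _ ⟨i, hi, rfl⟩ j ⟨hj, e⟩
  have := h.inj j (by omega) i (by omega) e
  omega

lemma union_segments (h : PathEnum G W m f) {i : ℕ} (hi : i < m) :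
    (Icc 0 i).image f ∪ (Icc (i + 1) m).image f = W := by
  rw [← h.image_Icc, ← image_union]
  congr 1
  ext j
  simp only [mem_union, mem_Icc]
  omega

lemma segment (h : PathEnum G W m f) {a b : ℕ} (hab : a ≤ b) (hb : b ≤ m) :
    PathOn G ((Icc a b).image f) (f a) (f b) := by
  induction b, hab using Nat.le_induction with
  | base => simpa using PathOn.single (f a)
  | succ b hab ih =>
    rw [← insert_Icc_right_eq_Icc_add_one (by omega), image_insert, insert_eq, union_comm]
    refine (ih (by omega)).append (.single _) ?_ (h.adj b (by omega))
    simpa using h.disjoint_segments a (Nat.lt_succ_self b) hb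

lemma pathOn (h : PathEnum G W m f) : PathOn G W (f 0) (f m) :=
  h.image_Icc ▸ h.segment (Nat.zero_le m) le_rfl

lemma rotate (h : PathEnum G W m f) (hclose : G.Adj (f m) (f 0)) {i : ℕ} (hi : i < m) :
    PathOn G W (f (i + 1)) (f i) := by
  rw [← h.union_segments hi, union_comm]
  exact (h.segment hi le_rfl).append (h.segment (Nat.zero_le i) hi.le)
    (h.disjoint_segments 0 (Nat.lt_succ_self i) le_rfl).symm hclose

lemma flip (h : PathEnum G W m f) {i : ℕ} (hi : i < m) (hadj : G.Adj (f i) (f m)) :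
    PathOn G W (f 0) (f (i + 1)) := by
  rw [← h.union_segments hi]
  exact (h.segment (Nat.zero_le i) hi.le).append (h.segment hi le_rfl).symm
    (h.disjoint_segments 0 (Nat.lt_succ_self i) le_rfl) hadj

end PathEnum

/-- There is a cycle of `G` whose vertex set is exactly `W`, presented as a path on `W` together
with an edge joining its ends. -/
def CycleOn (G : SimpleGraph V) (W : Finset V) : Prop :=
  3 ≤ #W ∧ ∃ p q, PathOn G W p q ∧ G.Adj q p

lemma hasCycleLen_iff {V : Type} [DecidableEq V] {G : SimpleGraph V} {l : ℕ} :
    HasCycleLen G l ↔ ∃ W, CycleOn G W ∧ #W = l := by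
  constructor
  · rintro ⟨v, _ | ⟨hadj, w⟩, hc, rfl⟩
    · simp at hc
    · have hlen := hc.three_le_length
      rw [Walk.cons_isCycle_iff] at hc
      have hcard : #w.support.toFinset = (Walk.cons hadj w).length := by
        rw [List.toFinset_card_of_nodup hc.1.support_nodup, Walk.length_support, Walk.length_cons]
      exact ⟨_, ⟨by omega, _, _, .of_walk w hc.1, hadj⟩, hcard⟩
  · rintro ⟨W, ⟨h3, p, q, hpq, hadj⟩, rfl⟩
    obtain ⟨w, hw, rfl⟩ := hpq.exists_walk
    have hcard := List.toFinset_card_of_nodup hw.support_nodup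
    rw [Walk.length_support] at hcard
    refine ⟨q, .cons hadj w, (Walk.cons_isCycle_iff ..).2 ⟨hw, fun he => ?_⟩, by simp [hcard]⟩
    rw [Sym2.eq_swap] at he
    have := hw.length_eq_one_of_mem_edges he
    omega

lemma CycleOn.exists_pathOn (h : CycleOn G W) (hu : u ∈ W) :
    ∃ v, PathOn G W u v ∧ G.Adj v u := by
  obtain ⟨-, p, q, hpq, hadj⟩ := h
  obtain ⟨m, f, hf, rfl, rfl⟩ := hpq.exists_enum
  obtain ⟨_ | i, hi, rfl⟩ := (hf.mem_iff u).1 hu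
  · exact ⟨_, hpq, hadj⟩
  · exact ⟨_, hf.rotate hadj hi, hf.adj i hi⟩

lemma PathOn.cycleOn_union (h : PathOn G W p q) (h' : PathOn G D u v) (hWD : Disjoint W D)
    (hqu : G.Adj q u) (hvp : G.Adj v p) (hcard : 3 ≤ #W + #D) : CycleOn G (W ∪ D) :=
  ⟨by rwa [card_union_of_disjoint hWD], p, v, h.append h' hWD hqu, hvp⟩

lemma cycleOn_of_isClique (hW : G.IsClique W) (h3 : 3 ≤ #W) : CycleOn G W := by
  have hpath : ∀ D : Finset V, D.Nonempty → G.IsClique D → ∃ p q, PathOn G D p q := by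
    intro D hD
    induction hD using Nonempty.cons_induction with
    | singleton a => exact fun _ => ⟨a, a, .single a⟩
    | cons a s ha _ ih =>
      intro hD
      rw [cons_eq_insert] at hD ⊢
      obtain ⟨p, q, hpq⟩ := ih (hD.subset (by simp))
      have hap : a ≠ p := fun e => ha (e ▸ hpq.left_mem)
      exact ⟨a, q, .cons (hD (by simp) (by simp [hpq.left_mem]) hap) ha hpq⟩
  obtain ⟨p, q, hpq⟩ := hpath W (card_pos.1 (by omega)) hW
  exact ⟨h3, p, q, hpq, hW hpq.right_mem hpq.left_mem (hpq.ne (by omega)).symm⟩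

lemma PathOn.deleteEdges_endpoints (h : PathOn G W p q) (h3 : 3 ≤ #W) :
    PathOn (G.deleteEdges {s(p, q)}) W p q := by
  obtain ⟨m, f, hf, rfl, rfl⟩ := h.exists_enum
  have hm := hf.card_eq
  refine PathEnum.pathOn ⟨fun i hi => ?_, hf.inj, hf.mem_iff⟩
  rw [deleteEdges_adj, Set.mem_singleton_iff, Sym2.eq_iff]
  refine ⟨hf.adj i hi, ?_⟩
  rintro (⟨e₀, e₁⟩ | ⟨-, e₁⟩)
  · have := hf.inj i (by omega) 0 (by omega) e₀
    have := hf.inj (i + 1) (by omega) m le_rfl e₁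
    omega
  · have := hf.inj (i + 1) (by omega) 0 (by omega) e₁
    omega

lemma CycleOn.pathOn_of_sup_edge (h : CycleOn (G ⊔ edge u v) W) (hn : ¬ CycleOn G W) :
    PathOn G W u v := by
  obtain ⟨h3, p, q, hpq, hqp⟩ := h
  obtain ⟨a, b, hab, hba, hnba⟩ :
      ∃ a b, PathOn (G ⊔ edge u v) W a b ∧ (G ⊔ edge u v).Adj b a ∧ ¬ G.Adj b a := by
    obtain ⟨m, f, hf, rfl, rfl⟩ := hpq.exists_enum
    by_contra! hall
    have hfG : PathEnum G W m f :=
      ⟨fun i hi => hall _ _ (hf.rotate hqp hi) (hf.adj i hi), hf.inj, hf.mem_iff⟩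
    exact hn ⟨h3, _, _, hfG.pathOn, hall _ _ hpq hqp⟩
  have hedge : s(b, a) = s(u, v) := by
    rw [sup_adj, edge_adj] at hba
    rcases hba.resolve_left hnba with ⟨⟨rfl, rfl⟩ | ⟨rfl, rfl⟩, -⟩
    exacts [rfl, Sym2.eq_swap]
  have hG : PathOn G W a b := by
    refine (hab.deleteEdges_endpoints h3).mono fun x _ y _ hxy => ?_
    rw [deleteEdges_adj, sup_adj, edge_adj, Sym2.eq_swap, hedge, Set.mem_singleton_iff,
      Sym2.eq_iff] at hxy
    exact hxy.1.resolve_right fun h => hxy.2 h.1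
  rcases Sym2.eq_iff.1 hedge with ⟨rfl, rfl⟩ | ⟨rfl, rfl⟩
  exacts [hG.symm, hG]

section Posa

variable {T : Finset V}

/-- Take for `T` the predecessors on the path of the neighbours of `u`: an edge from `v` into `T`
would close up a cycle. -/
lemma PathOn.exists_nonadj_of_not_cycleOn (h : PathOn G W u v) (h3 : 3 ≤ #W)
    (hn : ¬ CycleOn G W) :
    ∃ T ⊆ W, #T = #(nbrsOn G W u) ∧ v ∉ T ∧ ∀ x ∈ T, ¬ G.Adj v x := by
  obtain ⟨m, f, hf, rfl, rfl⟩ := h.exists_enum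
  let I : Finset ℕ := open Classical in {i ∈ range m | G.Adj (f 0) (f (i + 1))}
  have hI : ∀ i, i ∈ I ↔ i < m ∧ G.Adj (f 0) (f (i + 1)) := by simp [I]
  have hsucc : I.image (fun i => f (i + 1)) = nbrsOn G W (f 0) := by
    ext x
    simp only [mem_image, hI, mem_nbrsOn, hf.mem_iff]
    constructor
    · rintro ⟨i, ⟨hi, hadj⟩, rfl⟩
      exact ⟨⟨i + 1, hi, rfl⟩, hadj⟩
    · rintro ⟨⟨_ | i, hi, rfl⟩, hadj⟩
      · exact (hadj.ne rfl).elim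
      · exact ⟨i, ⟨hi, hadj⟩, rfl⟩
  refine ⟨I.image f, ?_, ?_, ?_, ?_⟩
  · simp only [image_subset_iff, hI]
    exact fun i hi => hf.mem hi.1.le
  · rw [← hsucc, card_image_of_injOn, card_image_of_injOn]
    · intro i hi j hj e
      rw [mem_coe, hI] at hi hj
      exact Nat.succ_injective (hf.inj _ hi.1 _ hj.1 e)
    · intro i hi j hj e
      rw [mem_coe, hI] at hi hj
      exact hf.inj i hi.1.le j hj.1.le e
  · simp only [mem_image, hI, not_exists]
    rintro i ⟨⟨hi, -⟩, e⟩
    exact hi.ne (hf.inj i hi.le m le_rfl e)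
  · simp only [mem_image, hI]
    rintro _ ⟨i, ⟨hi, hadj⟩, rfl⟩ hcross
    exact hn ⟨h3, _, _, hf.flip hi hcross.symm, hadj.symm⟩

lemma exists_maximal_not_cycleOn [Finite V] (hn : ¬ CycleOn G W) :
    ∃ M, G ≤ M ∧ ¬ CycleOn M W ∧ ∀ u v, u ≠ v → ¬ M.Adj u v → PathOn M W u v := by
  obtain ⟨M, hGM, hM⟩ := Set.Finite.exists_le_maximal (s := {M | ¬ CycleOn M W}) (Set.toFinite _) hn
  refine ⟨M, hGM, hM.prop, fun u v huv hadj => ?_⟩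
  refine CycleOn.pathOn_of_sup_edge (of_not_not fun hn' => hadj ?_) hM.prop
  exact hM.le_of_ge hn' le_sup_left (by simp [edge_adj, huv])

lemma exists_low_degree_of_not_cycleOn [Finite V] (h3 : 3 ≤ #W) (hn : ¬ CycleOn G W) :
    ∃ d, 1 ≤ d ∧ 2 * d < #W ∧ ∃ T ⊆ W, #T = d ∧ ∀ x ∈ T, #(nbrsOn G W x) ≤ d := by
  obtain ⟨M, hGM, hMn, hM⟩ := exists_maximal_not_cycleOn hn
  have hdeg : ∀ x, #(nbrsOn G W x) ≤ #(nbrsOn M W x) := fun x => card_le_card fun y hy =>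
    mem_nbrsOn.2 ⟨(mem_nbrsOn.1 hy).1, hGM (mem_nbrsOn.1 hy).2⟩
  obtain ⟨u, hu, v, hv, huv, hadj, hle, hmax⟩ :=
    exists_nonadj_max_degree_sum fun h => hMn (cycleOn_of_isClique h h3)
  obtain ⟨T, hT, hcard, hvT, hTv⟩ := (hM u v huv hadj).exists_nonadj_of_not_cycleOn h3 hMn
  have hsum := card_nbrsOn_add_lt_of_nonadj hT hcard hv hvT hTv
  have hTdeg : ∀ x ∈ T, #(nbrsOn G W x) ≤ #T := fun x hx =>
    ((hdeg x).trans (hmax x (hT hx) (fun e => hvT (e ▸ hx)) (hTv x hx))).trans hcard.ge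
  rcases Nat.eq_zero_or_pos #T with h0 | h1
  · have := hdeg u
    exact ⟨1, le_rfl, by omega, {u}, by simpa using hu, card_singleton u, by simp; omega⟩
  · exact ⟨#T, h1, by omega, T, hT, rfl, hTdeg⟩

end Posa

end PathsAndCycles

section HamiltonConnected

open Finset

variable {V : Type*} {G : SimpleGraph V} {B H : Finset V} {p q u x : V}

/-- The graph `G` with all edges at `u` replaced by the two edges `up` and `uq`. For `u ∉ H`, its
cycles on `insert u H` come from the paths of `G` on `H` from `p` to `q`. -/
def reattach (G : SimpleGraph V) (u p q : V) : SimpleGraph V :=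
  G.deleteIncidenceSet u ⊔ edge u p ⊔ edge u q

lemma reattach_adj_left (hup : u ≠ p) (huq : u ≠ q) {y : V} :
    (reattach G u p q).Adj u y ↔ y = p ∨ y = q := by
  simp only [reattach, sup_adj, deleteIncidenceSet_adj, edge_adj]
  grind

lemma reattach_adj_of_ne {y : V} (hx : x ≠ u) (hy : y ≠ u) :
    (reattach G u p q).Adj x y ↔ G.Adj x y := by
  simp [reattach, sup_adj, deleteIncidenceSet_adj, edge_adj, hx, hy]

variable [DecidableEq V]

lemma PathOn.of_cycleOn_reattach (hu : u ∉ H) (hup : u ≠ p) (huq : u ≠ q) (hH : 2 ≤ #H)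
    (h : CycleOn (reattach G u p q) (insert u H)) : PathOn G H p q := by
  have hcard : #(insert u H) = #H + 1 := card_insert_of_notMem hu
  obtain ⟨q', hpath, hclose⟩ := h.exists_pathOn (mem_insert_self u H)
  obtain ⟨p', hup', hpq'⟩ := hpath.uncons (by omega)
  rw [erase_insert hu] at hpq'
  have hG : PathOn G H p' q' := hpq'.mono fun x hx y hy hxy =>
    (reattach_adj_of_ne (ne_of_mem_of_not_mem hx hu) (ne_of_mem_of_not_mem hy hu)).1 hxy
  have hne := hG.ne hH
  rcases (reattach_adj_left hup huq).1 hup' with rfl | rfl <;>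
    rcases (reattach_adj_left hup huq).1 hclose.symm with rfl | rfl
  exacts [(hne rfl).elim, hG, hG.symm, (hne rfl).elim]

lemma exists_low_degree_of_not_pathOn [Finite V] (hdeg : ∀ v ∈ H, 2 ≤ #(nbrsOn G H v))
    (hu : u ∉ H) (hp : p ∈ H) (hq : q ∈ H) (hpq : p ≠ q) (hn : ¬ PathOn G H p q) :
    ∃ d, 1 ≤ d ∧ 2 * d + 2 ≤ #H ∧ ∃ T ⊆ H, #T = d ∧ ∀ v ∈ T, #(nbrsOn G H v) ≤ d + 1 := by
  have hup : u ≠ p := (ne_of_mem_of_not_mem hp hu).symm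
  have huq : u ≠ q := (ne_of_mem_of_not_mem hq hu).symm
  have hH : 2 ≤ #H := card_pair hpq ▸ card_le_card (by simp [insert_subset_iff, hp, hq])
  have hcard : #(insert u H) = #H + 1 := card_insert_of_notMem hu
  obtain ⟨e, he, heH, T, hT, hTe, hTdeg⟩ := exists_low_degree_of_not_cycleOn (by omega)
    fun hc => hn (.of_cycleOn_reattach hu hup huq hH hc)
  have hle : ∀ v ∈ H, #(nbrsOn G H v) ≤ #(nbrsOn (reattach G u p q) (insert u H) v) := by
    refine fun v hv => card_le_card fun y hy => ?_
    obtain ⟨hyH, hvy⟩ := mem_nbrsOn.1 hy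
    exact mem_nbrsOn.2 ⟨mem_insert_of_mem hyH, (reattach_adj_of_ne (ne_of_mem_of_not_mem hv hu)
      (ne_of_mem_of_not_mem hyH hu)).2 hvy⟩
  have hu2 : 2 ≤ #(nbrsOn (reattach G u p q) (insert u H) u) := by
    rw [← card_pair hpq]
    refine card_le_card fun y hy => mem_nbrsOn.2 ?_
    rw [mem_insert, mem_singleton] at hy
    refine ⟨mem_insert_of_mem ?_, (reattach_adj_left hup huq).2 hy⟩
    rcases hy with rfl | rfl <;> assumption
  have he2 : 2 ≤ e := by
    obtain ⟨t, ht⟩ := card_pos.1 (by omega : 0 < #T)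
    rcases mem_insert.1 (hT ht) with rfl | htH
    · exact hu2.trans (hTdeg t ht)
    · exact (hdeg t htH).trans ((hle t htH).trans (hTdeg t ht))
  obtain ⟨S, hS, hSe⟩ := exists_subset_card_eq (s := T.erase u) (n := e - 1)
    (hTe ▸ pred_card_le_card_erase)
  have hSH : ∀ v ∈ S, v ∈ H := fun v hv =>
    (mem_insert.1 (hT (mem_of_mem_erase (hS hv)))).resolve_left (ne_of_mem_erase (hS hv))
  refine ⟨e - 1, by omega, by omega, S, hSH, hSe, fun v hv => ?_⟩
  have := hle v (hSH v hv)
  have := hTdeg v (mem_of_mem_erase (hS hv))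
  omega

lemma PathOn.of_card_missing_le_one [Finite V] (hB : 6 ≤ #B) (hmiss : #(edgesOn Gᶜ B) ≤ 1)
    (hu : u ∉ B) (hp : p ∈ B) (hq : q ∈ B) (hpq : p ≠ q) : PathOn G B p q := by
  have hdeg : ∀ v ∈ B, #B ≤ #(nbrsOn G B v) + 2 := fun v hv => by
    have := card_le_card_nbrsOn_add_missing G hv
    omega
  by_contra hn
  obtain ⟨d, hd1, hd, T, hT, rfl, hTdeg⟩ := exists_low_degree_of_not_pathOn
    (fun v hv => by have := hdeg v hv; omega) hu hp hq hpq hn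
  obtain ⟨t, ht⟩ := card_pos.1 hd1
  have := hdeg t (hT ht)
  have := hTdeg t ht
  omega

lemma exists_degree_eq_two_of_not_pathOn [Finite V] (hH : 15 ≤ #H)
    (hmiss : #(edgesOn Gᶜ H) + 2 ≤ #H) (hdeg : ∀ v ∈ H, 2 ≤ #(nbrsOn G H v)) (hu : u ∉ H)
    (hp : p ∈ H) (hq : q ∈ H) (hpq : p ≠ q) (hn : ¬ PathOn G H p q) :
    ∃ x ∈ H, #(nbrsOn G H x) = 2 ∧ #(edgesOn Gᶜ (H.erase x)) ≤ 1 := by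
  obtain ⟨d, hd1, hd, T, hT, hTd, hTdeg⟩ := exists_low_degree_of_not_pathOn hdeg hu hp hq hpq hn
  obtain rfl : d = 1 := by
    by_contra hne
    have hlow := card_edgesOn_le_of_card_nbrsOn_le hT hTdeg
    rw [hTd] at hlow
    have htot := card_edgesOn_add_card_edgesOn_compl G H
    obtain ⟨e, he⟩ : ∃ e, #H = (d + 2 + e) + d := ⟨#H - (2 * d + 2), by omega⟩
    obtain ⟨c, rfl⟩ : ∃ c, d = c + 2 := ⟨d - 2, by omega⟩
    have hsplit := choose_two_add (c + 2 + 2 + e) (c + 2)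
    have hc := choose_two_add c 2
    rw [Nat.choose_self] at hc
    rw [← he] at hsplit
    rw [show #H - (c + 2) = c + 2 + 2 + e by omega] at hlow
    nlinarith
  obtain ⟨x, rfl⟩ := card_eq_one.1 hTd
  have hxH : x ∈ H := hT (mem_singleton_self x)
  have hx2 : #(nbrsOn G H x) = 2 := le_antisymm (hTdeg x (mem_singleton_self x)) (hdeg x hxH)
  refine ⟨x, hxH, hx2, ?_⟩
  have := card_edgesOn_erase Gᶜ hxH
  have := card_nbrsOn_add_card_nbrsOn_compl G hxH
  omega

end HamiltonConnected

section LongCycle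

open Finset

variable {V : Type*} [Finite V] [DecidableEq V] {G : SimpleGraph V} {W : Finset V} {r s : ℕ}

lemma two_mul_add_lt_of_low_degree_bound {r q d : ℕ} (hq : 5 * r + 4 ≤ q)
    (hr : r * (r + 3) + 4 ≤ 2 * q) (hd : r + 1 ≤ d) (hd' : 2 * d < r + q + 1) :
    2 * (r * q) + 3 * d ^ 2 + d < 2 * (d * (r + q + 1)) := by
  zify at *
  obtain h | h := le_or_gt ((r : ℤ) + q + 2) (6 * d)
  · nlinarith [mul_nonneg (show 0 ≤ (r : ℤ) + q - 2 * d by linarith)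
      (show 0 ≤ (6 : ℤ) * d - r - q - 2 by linarith),
      mul_nonneg (show 0 ≤ (q : ℤ) - 5 * r - 4 by linarith) (show 0 ≤ (q : ℤ) by positivity),
      mul_nonneg (show 0 ≤ (r : ℤ) by positivity) (show 0 ≤ (q : ℤ) - 5 * r - 4 by linarith)]
  · nlinarith [mul_nonneg (show 0 ≤ (d : ℤ) - (r + 1) by linarith)
      (show 0 ≤ 2 * ((r : ℤ) + q + 1) - 3 * r - 4 - 3 * d by linarith)]

lemma cycleOn_of_card_missing_le (hs : 5 * r + 4 ≤ s)
    (hr : r * (r + 3) + 4 ≤ 2 * s) (hW : #W = r + s + 1) (hmiss : #(edgesOn Gᶜ W) ≤ r * s)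
    (hdeg : ∀ v ∈ W, r + 1 ≤ #(nbrsOn G W v)) : CycleOn G W := by
  by_contra hn
  obtain ⟨d, hd1, hdW, T, hTW, hTd, hT⟩ := exists_low_degree_of_not_cycleOn (by lia) hn
  have hrd : r + 1 ≤ d := by
    obtain ⟨v, hv⟩ := card_pos.1 (hTd ▸ hd1 : 0 < #T)
    exact (hdeg v (hTW hv)).trans (hT v hv)
  have hlow := card_edgesOn_le_of_card_nbrsOn_le hTW hT
  have htot := card_edgesOn_add_card_edgesOn_compl G W
  obtain ⟨e, he⟩ : ∃ e, #W = e + d := Nat.exists_eq_add_of_le' (by lia)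
  rw [hTd, he, Nat.add_sub_cancel] at hlow
  rw [he, choose_two_add] at htot
  have hd2 := two_mul_choose_two_add d
  have hnum := two_mul_add_lt_of_low_degree_bound hs hr hrd (by lia)
  rw [← hW, he] at hnum
  nlinarith

lemma exists_large_cycleOn (hs : 5 * r + 4 ≤ s)
    (hr : r * (r + 3) + 4 ≤ 2 * s) (hW : #W = r + s + 1) (hmiss : #(edgesOn Gᶜ W) ≤ r * s) :
    ∃ t ≤ r, ∃ H ⊆ W, #H = t + s + 1 ∧ #(edgesOn Gᶜ H) ≤ t * s ∧
      (∀ v ∈ H, t + 1 ≤ #(nbrsOn G H v)) ∧ CycleOn G H := by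
  obtain ⟨t, ht, H, hHW, hH, hmissH, hdeg⟩ := exists_subset_min_degree (by lia) hW hmiss
  exact ⟨t, ht, H, hHW, hH, hmissH, hdeg,
    cycleOn_of_card_missing_le (by lia) (by nlinarith) hH hmissH hdeg⟩

end LongCycle

section Pancyclic

open Finset

variable {V : Type*} [DecidableEq V] {G : SimpleGraph V} {W : Finset V} {f : ℕ → V} {i j l m : ℕ}

namespace PathEnum

lemma exists_cycleOn_of_chords_le (h : PathEnum G W m f) (hclose : G.Adj (f m) (f 0)) (hi : 1 ≤ i)
    (hij : i ≤ j) (hj : j < m) (h0i : G.Adj (f 0) (f i)) (hmj : G.Adj (f m) (f j)) :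
    ∃ D, CycleOn G D ∧ #D = j - i + 3 := by
  have hinner := h.segment hij hj.le
  have hdisj : Disjoint {f m, f 0} ((Icc i j).image f) := by
    have h0 := h.disjoint_segments 0 hi hj.le
    have hm := h.disjoint_segments i hj le_rfl
    rw [Icc_self, image_singleton] at h0 hm
    exact disjoint_union_left.2 ⟨hm.symm, h0⟩
  have hcard := h.card_segment i hj.le
  refine ⟨_, (PathOn.pair hclose).cycleOn_union hinner hdisj h0i hmj.symm ?_, ?_⟩
  · rw [card_pair hclose.ne]
    lia
  · rw [card_union_of_disjoint hdisj, card_pair hclose.ne]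
    lia

lemma exists_cycleOn_of_chords_lt (h : PathEnum G W m f) (hji : j < i) (hi : i ≤ m)
    (h3 : i < m + j) (h0i : G.Adj (f 0) (f i)) (hmj : G.Adj (f m) (f j)) :
    ∃ D, CycleOn G D ∧ #D = j + m + 2 - i := by
  have hdisj := h.disjoint_segments 0 hji (le_refl m)
  have hcard1 := h.card_segment 0 (hji.le.trans hi)
  have hcard2 := h.card_segment i le_rfl
  refine ⟨_, (h.segment j.zero_le (hji.le.trans hi)).cycleOn_union (h.segment hi le_rfl).symm hdisj
    hmj.symm h0i.symm ?_, ?_⟩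
  · lia
  · rw [card_union_of_disjoint hdisj]
    lia

lemma nbrsOn_eq_image [DecidableRel G.Adj] (h : PathEnum G W m f) (v : V) :
    nbrsOn G W v = {i ∈ range (m + 1) | G.Adj v (f i)}.image f := by
  ext x
  simp only [mem_nbrsOn, h.mem_iff, mem_image, mem_filter, mem_range, Nat.lt_succ_iff]
  grind

/-- The chords `f 0 f i` and `f m f (σ i)` would close up with the path to a cycle of length `l`, so
`σ` maps the neighbours of `f 0` injectively to non-neighbours of `f m`. -/
lemma card_nbrsOn_add_le (h : PathEnum G W m f) (hclose : G.Adj (f m) (f 0)) (hl : 3 ≤ l)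
    (hlm : l ≤ m) (hn : ∀ D, CycleOn G D → #D ≠ l) :
    #(nbrsOn G W (f 0)) + #(nbrsOn G W (f m)) ≤ #W := by
  classical
  let σ : ℕ → ℕ := fun i => if i + l ≤ m + 2 then i + l - 3 else if i = m then m else i + l - m - 2
  have hσ : Set.MapsTo σ ({i ∈ range (m + 1) | G.Adj (f 0) (f i)} : Finset ℕ)
      ({i ∈ range (m + 1) | ¬ G.Adj (f m) (f i)} : Finset ℕ) := by
    intro i hi
    simp only [coe_filter, mem_range, Set.mem_ofPred_eq] at hi ⊢
    obtain ⟨him, h0i⟩ := hi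
    have hi0 : i ≠ 0 := by
      rintro rfl
      exact G.irrefl h0i
    refine ⟨by lia, fun hmj => ?_⟩
    simp only [σ] at hmj
    split_ifs at hmj with hcase hlast
    · obtain ⟨D, hD, hcard⟩ :=
        h.exists_cycleOn_of_chords_le hclose (by lia) (by lia) (by lia) h0i hmj
      exact hn D hD (by lia)
    · exact G.irrefl hmj
    · obtain ⟨D, hD, hcard⟩ :=
        h.exists_cycleOn_of_chords_lt (by lia) (by lia) (by lia) h0i hmj
      exact hn D hD (by lia)
  have hinj : Set.InjOn σ ({i ∈ range (m + 1) | G.Adj (f 0) (f i)} : Finset ℕ) := by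
    intro i hi j hj e
    simp only [coe_filter, mem_range, Set.mem_ofPred_eq] at hi hj
    have hi0 : i ≠ 0 := by
      rintro rfl
      exact G.irrefl hi.2
    have hj0 : j ≠ 0 := by
      rintro rfl
      exact G.irrefl hj.2
    grind
  have hle := card_le_card_of_injOn σ hσ hinj
  have hsplit := card_filter_add_card_filter_not (s := range (m + 1)) fun i => G.Adj (f m) (f i)
  rw [card_range] at hsplit
  rw [h.nbrsOn_eq_image, h.nbrsOn_eq_image, h.card_eq]
  exact (add_le_add card_image_le card_image_le).trans (by lia)

end PathEnum

lemma four_mul_card_edgesOn_le (h : CycleOn G W) (hl : 3 ≤ l) (hlW : l ≤ #W)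
    (hn : ∀ D, CycleOn G D → #D ≠ l) : 4 * #(edgesOn G W) ≤ #W * #W := by
  have hlt : l < #W := hlW.lt_of_ne (hn W h).symm
  obtain ⟨-, p, q, hpq, hqp⟩ := h
  have hend : ∀ {p q : V}, PathOn G W p q → G.Adj q p →
      #(nbrsOn G W p) + #(nbrsOn G W q) ≤ #W := by
    intro p q hpq hqp
    obtain ⟨m, f, hf, rfl, rfl⟩ := hpq.exists_enum
    have hm := hf.card_eq
    exact hf.card_nbrsOn_add_le hqp hl (by lia) hn
  obtain ⟨m, f, hf, rfl, rfl⟩ := hpq.exists_enum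
  have hstep : ∀ i ∈ range m, #(nbrsOn G W (f i)) + #(nbrsOn G W (f (i + 1))) ≤ #W := by
    intro i hi
    rw [mem_range] at hi
    rw [add_comm]
    exact hend (hf.rotate hqp hi) (hf.adj i hi)
  have hlast := hend hpq hqp
  have hsum := sum_le_card_nsmul _ _ _ hstep
  rw [sum_add_distrib, card_range, smul_eq_mul] at hsum
  have hhand := hf.sum_eq fun v => #(nbrsOn G W v)
  rw [sum_card_nbrsOn] at hhand
  have hfirst := sum_range_succ (fun i => #(nbrsOn G W (f i))) m
  have hfinal := sum_range_succ' (fun i => #(nbrsOn G W (f i))) m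
  have hsq : #W * #W = m * #W + #W := by
    nth_rw 1 [hf.card_eq]
    ring
  lia

lemma exists_cycleOn_card_eq {s q : ℕ} (hq : 4 * s + 2 ≤ q)
    (hmiss : #(edgesOn Gᶜ W) ≤ s * q) (h : CycleOn G W) (hW : q + 1 ≤ #W) (hl : 3 ≤ l)
    (hlW : l ≤ #W) : ∃ D, CycleOn G D ∧ #D = l := by
  by_contra! hn
  have hbondy := four_mul_card_edgesOn_le h hl hlW hn
  have htot := card_edgesOn_add_card_edgesOn_compl G W
  have hchoose := two_mul_choose_two_add #W
  nlinarith

end Pancyclic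

section Ear

open Finset

variable {V : Type*} [DecidableEq V] {G : SimpleGraph V} {A B D R : Finset V}
  {a b p q u v x y z : V} {s : ℕ}

lemma PathOn.exists_cycleOn_of_ear (h : PathOn G B p q) (hD : PathOn G D u v)
    (hBD : Disjoint B D) (hup : G.Adj u p) (hvq : G.Adj v q) (hB : 2 ≤ #B) :
    ∃ C, CycleOn G C ∧ #C = #B + #D := by
  have hDpos := card_pos.2 ⟨u, hD.left_mem⟩
  exact ⟨B ∪ D, h.symm.cycleOn_union hD hBD hup.symm hvq (by lia), card_union_of_disjoint hBD⟩

lemma PathOn.of_ear_at_end [Finite V] (hB : 7 ≤ #B) (hmiss : #(edgesOn Gᶜ B) ≤ 1) (hx : x ∉ B)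
    (ha : a ∈ B) (hb : b ∈ B) (hq : q ∈ B) (hab : a ≠ b) (hqa : q ≠ a) (hqb : q ≠ b)
    (hxa : G.Adj x a) (hxb : G.Adj x b) : PathOn G (insert x B) a q := by
  have hinner : PathOn G (B.erase a) b q := by
    refine .of_card_missing_le_one ?_ ?_ (notMem_erase a B) (mem_erase.2 ⟨hab.symm, hb⟩)
      (mem_erase.2 ⟨hqa, hq⟩) hqb.symm
    · rw [card_erase_of_mem ha]
      lia
    · exact (card_le_card (edgesOn_mono (erase_subset a B))).trans hmiss
  have hxa' : x ∉ B.erase a := fun h => hx (mem_of_mem_erase h)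
  have hpath := (hinner.cons hxb hxa').cons hxa.symm (by simp [hxa.ne'])
  rwa [insert_comm, insert_erase ha] at hpath

/-- An almost complete set `B` with an ear `a x b` on it, in a graph with no cycle longer than
`#B + 1`. The vertices `a` and `b` are the only neighbours of `x` in `B`. -/
structure ExtremalEar (G : SimpleGraph V) (B : Finset V) (x a b : V) : Prop where
  le_card : 8 ≤ #B
  card_missing_le : #(edgesOn Gᶜ B) ≤ 1
  notMem : x ∉ B
  left_mem : a ∈ B
  right_mem : b ∈ B
  ne : a ≠ b
  adj_iff : ∀ y ∈ B, G.Adj x y ↔ y = a ∨ y = b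
  card_cycleOn_le : ∀ D, CycleOn G D → #D ≤ #B + 1

namespace ExtremalEar

lemma symm (h : ExtremalEar G B x a b) : ExtremalEar G B x b a where
  __ := h
  left_mem := h.right_mem
  right_mem := h.left_mem
  ne := h.ne.symm
  adj_iff y hy := (h.adj_iff y hy).trans or_comm

lemma adj_left (h : ExtremalEar G B x a b) : G.Adj x a := (h.adj_iff a h.left_mem).2 (.inl rfl)

lemma adj_right (h : ExtremalEar G B x a b) : G.Adj x b := h.symm.adj_left

lemma card_insert (h : ExtremalEar G B x a b) : #(insert x B) = #B + 1 :=
  card_insert_of_notMem h.notMem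

lemma adj_left_or_adj_right (h : ExtremalEar G B x a b) (hp : p ∈ B) (hpa : p ≠ a) (hpb : p ≠ b) :
    G.Adj p a ∨ G.Adj p b := by
  by_contra! hadj
  have hdeg := card_le_card_nbrsOn_add_missing G hp
  have htot := card_nbrsOn_add_card_nbrsOn_compl G hp
  have hone : #(nbrsOn Gᶜ B p) ≤ 1 := by linarith [h.card_missing_le]
  exact h.ne (card_le_one.1 hone a (mem_nbrsOn.2 ⟨h.left_mem, hpa, hadj.1⟩) b
    (mem_nbrsOn.2 ⟨h.right_mem, hpb, hadj.2⟩))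

section Paths

variable [Finite V]

lemma pathOn_base (h : ExtremalEar G B x a b) (hp : p ∈ B) (hq : q ∈ B) (hpq : p ≠ q) :
    PathOn G B p q :=
  .of_card_missing_le_one (by linarith [h.le_card]) h.card_missing_le h.notMem hp hq hpq

lemma pathOn_apex (h : ExtremalEar G B x a b) (hq : q ∈ B) : PathOn G (insert x B) x q := by
  obtain rfl | hqa := eq_or_ne q a
  · exact (h.pathOn_base h.right_mem hq h.ne.symm).cons h.adj_right h.notMem
  · exact (h.pathOn_base h.left_mem hq hqa.symm).cons h.adj_left h.notMem

lemma pathOn_left (h : ExtremalEar G B x a b) (hq : q ∈ B) (hqa : q ≠ a) (hqb : q ≠ b) :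
    PathOn G (insert x B) a q :=
  .of_ear_at_end (by linarith [h.le_card]) h.card_missing_le h.notMem h.left_mem h.right_mem hq
    h.ne hqa hqb h.adj_left h.adj_right

lemma pathOn_of_adj_left (h : ExtremalEar G B x a b) (hp : p ∈ B) (hq : q ∈ B) (hpq : p ≠ q)
    (hpb : p ≠ b) (hqa : q ≠ a) (hqb : q ≠ b) (hadj : G.Adj p a) : PathOn G (insert x B) p q := by
  have hinner : PathOn G (insert x (B.erase p)) a q := by
    refine .of_ear_at_end ?_ ?_ (fun hx => h.notMem (mem_of_mem_erase hx))
      (mem_erase.2 ⟨hadj.ne', h.left_mem⟩) (mem_erase.2 ⟨hpb.symm, h.right_mem⟩)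
      (mem_erase.2 ⟨hpq.symm, hq⟩) h.ne hqa hqb h.adj_left h.adj_right
    · rw [card_erase_of_mem hp]
      exact Nat.le_sub_of_add_le h.le_card
    · exact (card_le_card (edgesOn_mono (erase_subset p B))).trans h.card_missing_le
  have hpx : p ≠ x := ne_of_mem_of_not_mem hp h.notMem
  have hpath := hinner.cons hadj (by simp [hpx])
  rwa [insert_comm, insert_erase hp] at hpath

lemma pathOn (h : ExtremalEar G B x a b) (hp : p ∈ insert x B) (hq : q ∈ insert x B)
    (hpq : p ≠ q) (hne : s(p, q) ≠ s(a, b)) : PathOn G (insert x B) p q := by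
  rw [Ne, Sym2.eq_iff] at hne
  obtain rfl | hpB := mem_insert.1 hp
  · exact h.pathOn_apex (mem_of_mem_insert_of_ne hq hpq.symm)
  obtain rfl | hqB := mem_insert.1 hq
  · exact (h.pathOn_apex hpB).symm
  by_cases hpa : p = a
  · subst hpa
    exact h.pathOn_left hqB hpq.symm (by tauto)
  by_cases hpb : p = b
  · subst hpb
    exact h.symm.pathOn_left hqB hpq.symm (by tauto)
  by_cases hqa : q = a
  · subst hqa
    exact (h.pathOn_left hpB hpq hpb).symm
  by_cases hqb : q = b
  · subst hqb
    exact (h.symm.pathOn_left hpB hpq hpa).symm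
  obtain hadj | hadj := h.adj_left_or_adj_right hpB hpa hpb
  · exact h.pathOn_of_adj_left hpB hqB hpq hpb hqa hqb hadj
  · exact h.symm.pathOn_of_adj_left hpB hqB hpq hpa hqb hqa hadj

lemma endpoints_eq_of_outer_path (h : ExtremalEar G B x a b) (hD : PathOn G D u v)
    (hdisj : Disjoint (insert x B) D) (hp : p ∈ insert x B) (hq : q ∈ insert x B) (hpq : p ≠ q)
    (hup : G.Adj u p) (hvq : G.Adj v q) : s(p, q) = s(a, b) := by
  by_contra hne
  obtain ⟨C, hC, hcard⟩ := (h.pathOn hp hq hpq hne).exists_cycleOn_of_ear hD hdisj hup hvq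
    (by linarith [h.card_insert, h.le_card])
  have hDpos := card_pos.2 ⟨u, hD.left_mem⟩
  linarith [h.card_cycleOn_le C hC, h.card_insert]

lemma card_outer_path_le_one (h : ExtremalEar G B x a b) (hD : PathOn G D u v)
    (hdisj : Disjoint (insert x B) D) (hp : p ∈ insert x B) (hq : q ∈ insert x B) (hpq : p ≠ q)
    (hup : G.Adj u p) (hvq : G.Adj v q) : #D ≤ 1 := by
  have hpqB : p ∈ B ∧ q ∈ B := by
    have hends := h.endpoints_eq_of_outer_path hD hdisj hp hq hpq hup hvq
    obtain ⟨rfl, rfl⟩ | ⟨rfl, rfl⟩ := Sym2.eq_iff.1 hends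
    exacts [⟨h.left_mem, h.right_mem⟩, ⟨h.right_mem, h.left_mem⟩]
  obtain ⟨C, hC, hcard⟩ := (h.pathOn_base hpqB.1 hpqB.2 hpq).exists_cycleOn_of_ear hD
    (hdisj.mono_left (subset_insert x B)) hup hvq (by linarith [h.le_card])
  linarith [h.card_cycleOn_le C hC]

lemma outer_adj_iff (h : ExtremalEar G B x a b) (hu : u ∉ insert x B)
    (h2 : 2 ≤ #(nbrsOn G (insert x B) u)) (hy : y ∈ insert x B) :
    G.Adj u y ↔ y = a ∨ y = b := by
  have hpair : ∀ p ∈ nbrsOn G (insert x B) u, ∀ q ∈ nbrsOn G (insert x B) u, p ≠ q →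
      s(p, q) = s(a, b) := fun p hp q hq hpq =>
    h.endpoints_eq_of_outer_path (.single u) (disjoint_singleton_right.2 hu) (mem_nbrsOn.1 hp).1
      (mem_nbrsOn.1 hq).1 hpq (mem_nbrsOn.1 hp).2 (mem_nbrsOn.1 hq).2
  obtain ⟨p, hp, q, hq, hpq⟩ := one_lt_card.1 h2
  have hab := Sym2.eq_iff.1 (hpair p hp q hq hpq)
  constructor
  · intro huy
    have hyu := mem_nbrsOn.2 ⟨hy, huy⟩
    by_cases hyp : y = p
    · grind
    · have := Sym2.eq_iff.1 (hpair y hyu p hp hyp)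
      grind
  · have := (mem_nbrsOn.1 hp).2
    have := (mem_nbrsOn.1 hq).2
    grind

lemma not_adj_of_two_nbrs (h : ExtremalEar G B x a b) (hu : u ∉ insert x B)
    (hu2 : 2 ≤ #(nbrsOn G (insert x B) u)) (hv : v ∉ insert x B) (hp : p ∈ insert x B)
    (hvp : G.Adj v p) : ¬ G.Adj u v := by
  intro huv
  have hdisj : Disjoint (insert x B) {u, v} := by
    simp only [disjoint_insert_right, disjoint_singleton_right]
    exact ⟨hu, hv⟩
  have hle : ∀ y ∈ insert x B, G.Adj u y → y ≠ p → #{u, v} ≤ 1 := fun y hy huy hyp =>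
    h.card_outer_path_le_one (.pair huv) hdisj hy hp hyp huy hvp
  rw [card_pair huv.ne] at hle
  have ha : a ∈ insert x B := mem_insert_of_mem h.left_mem
  have hb : b ∈ insert x B := mem_insert_of_mem h.right_mem
  have hab := h.ne
  have := hle a ha ((h.outer_adj_iff hu hu2 ha).2 (.inl rfl))
  have := hle b hb ((h.outer_adj_iff hu hu2 hb).2 (.inr rfl))
  grind

lemma eq_of_common_outer_nbr (h : ExtremalEar G B x a b) (hu : u ∉ insert x B)
    (hu2 : 2 ≤ #(nbrsOn G (insert x B) u)) (hv : v ∉ insert x B)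
    (hv2 : 2 ≤ #(nbrsOn G (insert x B) v)) (hz : z ∉ insert x B) (hzu : G.Adj z u)
    (hzv : G.Adj z v) : u = v := by
  by_contra huv
  have hpath : PathOn G (insert u {z, v}) u v :=
    (PathOn.pair hzv).cons hzu.symm (by simp [huv, hzu.ne'])
  have hdisj : Disjoint (insert x B) (insert u {z, v}) := by
    simp only [disjoint_insert_right, disjoint_singleton_right]
    exact ⟨hu, hz, hv⟩
  have ha : a ∈ insert x B := mem_insert_of_mem h.left_mem
  have hb : b ∈ insert x B := mem_insert_of_mem h.right_mem
  have hle := h.card_outer_path_le_one hpath hdisj ha hb h.ne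
    ((h.outer_adj_iff hu hu2 ha).2 (.inl rfl)) ((h.outer_adj_iff hv hv2 hb).2 (.inr rfl))
  exact huv (card_le_one.1 hle u (by simp) v (by simp))

lemma card_nbrsOn_outer (h : ExtremalEar G B x a b) (hu : u ∉ insert x B)
    (hu2 : 2 ≤ #(nbrsOn G (insert x B) u)) : #(nbrsOn G (insert x B) u) = 2 := by
  refine hu2.antisymm' ((card_le_card fun y hy => ?_).trans (card_pair h.ne).le)
  have hy := mem_nbrsOn.1 hy
  simpa using (h.outer_adj_iff hu hu2 hy.1).1 hy.2

lemma card_nbrsOn_union_le_one (h : ExtremalEar G B x a b) (hA : ∀ u ∈ A, u ∉ insert x B)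
    (hA2 : ∀ u ∈ A, 2 ≤ #(nbrsOn G (insert x B) u)) (hz : z ∉ insert x B)
    (hz1 : #(nbrsOn G (insert x B) z) ≤ 1) : #(nbrsOn G (insert x B ∪ A) z) ≤ 1 := by
  have hmixed : ∀ p ∈ insert x B, G.Adj z p → ∀ u ∈ A, ¬ G.Adj z u := fun p hp hzp u hu hzu =>
    h.not_adj_of_two_nbrs (hA u hu) (hA2 u hu) hz hp hzp hzu.symm
  refine card_le_one.2 fun u hu v hv => ?_
  obtain ⟨hu, hzu⟩ := mem_nbrsOn.1 hu
  obtain ⟨hv, hzv⟩ := mem_nbrsOn.1 hv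
  obtain hu | hu := mem_union.1 hu <;> obtain hv | hv := mem_union.1 hv
  · exact card_le_one.1 hz1 u (mem_nbrsOn.2 ⟨hu, hzu⟩) v (mem_nbrsOn.2 ⟨hv, hzv⟩)
  · exact absurd hzv (hmixed u hu hzu v hv)
  · exact absurd hzu (hmixed v hv hzv u hu)
  · exact h.eq_of_common_outer_nbr (hA u hu) (hA2 u hu) (hA v hv) (hA2 v hv) hz hzu hzv

lemma card_edgesOn_outer_eq_zero (h : ExtremalEar G B x a b) (hA : ∀ u ∈ A, u ∉ insert x B)
    (hA2 : ∀ u ∈ A, 2 ≤ #(nbrsOn G (insert x B) u)) : #(edgesOn G A) = 0 := by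
  rw [card_eq_zero, eq_empty_iff_forall_notMem]
  intro e he
  induction e using Sym2.ind with
  | _ u v =>
    obtain ⟨huv, hadj⟩ := mem_edgesOn.1 he
    obtain ⟨hu, hv⟩ := mk_mem_sym2_iff.1 huv
    have ha := mem_insert_of_mem (b := x) h.left_mem
    exact h.not_adj_of_two_nbrs (hA u hu) (hA2 u hu) (hA v hv) ha
      ((h.outer_adj_iff (hA v hv) (hA2 v hv) ha).2 (.inl rfl)) hadj

lemma card_edgesOn_le (h : ExtremalEar G B x a b) (hA : ∀ u ∈ A, u ∉ insert x B)
    (hA2 : ∀ u ∈ A, 2 ≤ #(nbrsOn G (insert x B) u)) (hR : ∀ z ∈ R, z ∉ insert x B)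
    (hR1 : ∀ z ∈ R, #(nbrsOn G (insert x B) z) ≤ 1) (hAR : Disjoint A R) :
    #(edgesOn G (insert x B ∪ A ∪ R)) ≤
      #(edgesOn G B) + 2 + 2 * #A + (#R).choose 2 + #R := by
  have hHA : Disjoint (insert x B) A := Finset.disjoint_right.2 hA
  have hHR : Disjoint (insert x B) R := Finset.disjoint_right.2 hR
  have hx : #(nbrsOn G B x) ≤ 2 := by
    refine (card_le_card fun y hy => ?_).trans (card_pair h.ne).le
    have hy := mem_nbrsOn.1 hy
    simpa using (h.adj_iff y hy.1).1 hy.2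
  have hsumA : ∑ u ∈ A, #(nbrsOn G (insert x B) u) = #A * 2 :=
    sum_const_nat fun u hu => h.card_nbrsOn_outer (hA u hu) (hA2 u hu)
  have hsumR : ∑ z ∈ R, #(nbrsOn G (insert x B ∪ A) z) ≤ #R * 1 :=
    sum_le_card_nsmul _ _ _ fun z hz =>
      h.card_nbrsOn_union_le_one hA hA2 (hR z hz) (hR1 z hz)
  have hedgesR := card_edgesOn_add_card_edgesOn_compl G R
  rw [card_edgesOn_union G (disjoint_union_left.2 ⟨hHR, hAR⟩), card_edgesOn_union G hHA,
    card_edgesOn_insert G h.notMem, h.card_edgesOn_outer_eq_zero hA hA2, hsumA]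
  lia

lemma choose_outer_add_le_one (h : ExtremalEar G B x a b) (hA : ∀ u ∈ A, u ∉ insert x B)
    (hA2 : ∀ u ∈ A, 2 ≤ #(nbrsOn G (insert x B) u)) (hR : ∀ z ∈ R, z ∉ insert x B)
    (hR1 : ∀ z ∈ R, #(nbrsOn G (insert x B) z) ≤ 1) (hAR : Disjoint A R) (hB : #B = s + 1)
    (hmiss : #(edgesOn Gᶜ (insert x B ∪ A ∪ R)) ≤ (#A + #R + 1) * s) :
    (#A).choose 2 + #A * #R + #R + #(edgesOn Gᶜ B) ≤ 1 := by
  have hcard : #(insert x B ∪ A ∪ R) = (s + 1) + ((#A + #R) + 1) := by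
    have hHA : Disjoint (insert x B) A := Finset.disjoint_right.2 hA
    have hHR : Disjoint (insert x B) R := Finset.disjoint_right.2 hR
    rw [card_union_of_disjoint (disjoint_union_left.2 ⟨hHR, hAR⟩), card_union_of_disjoint hHA,
      h.card_insert, hB]
    ring
  have hedges := h.card_edgesOn_le hA hA2 hR hR1 hAR
  have htotal := card_edgesOn_add_card_edgesOn_compl G (insert x B ∪ A ∪ R)
  have hbase := card_edgesOn_add_card_edgesOn_compl G B
  rw [hcard, choose_two_add (s + 1), choose_two_add (#A + #R), choose_two_add #A] at htotal
  rw [hB] at hbase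
  simp only [Nat.choose_eq_zero_of_lt one_lt_two] at htotal
  lia

end Paths

end ExtremalEar

end Ear

section Extremal

open Finset

variable {V : Type*} {G : SimpleGraph V} {B H K P I W : Finset V}
  {a b u v x y z : V} {r s : ℕ}

/-- The join `K₂ ∨ (K_m + t·K₁)` when `#P = 2` and `#I = t`: the vertices of `P` are joined to
everything, `I` is independent and the remaining vertices form a clique. -/
def gammaOn (P I : Finset V) : SimpleGraph V where
  Adj u v := u ≠ v ∧ (u ∈ P ∨ v ∈ P ∨ (u ∉ I ∧ v ∉ I))
  symm := ⟨fun _ _ h => ⟨h.1.symm, by tauto⟩⟩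
  loopless := ⟨fun _ h => h.1 rfl⟩

/-- Two cliques `K` and `Kᶜ ∪ {a}` sharing exactly the vertex `a ∈ K`. -/
def cliquesGluedAt (K : Finset V) (a : V) : SimpleGraph V where
  Adj u v := u ≠ v ∧ (u = a ∨ v = a ∨ (u ∈ K ↔ v ∈ K))
  symm := ⟨fun _ _ h => ⟨h.1.symm, by tauto⟩⟩
  loopless := ⟨fun _ h => h.1 rfl⟩

lemma eq_cliquesGluedAt (hK : G.IsClique (K : Set V)) (hKc : G.IsClique (Kᶜ : Set V)) (ha : a ∈ K)
    (hatt : ∀ v ∉ K, ∀ y ∈ K, G.Adj v y ↔ y = a) : G = cliquesGluedAt K a := by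
  have hcross : ∀ y ∈ K, ∀ z ∉ K, G.Adj y z ↔ (cliquesGluedAt K a).Adj y z :=
    fun y hy z hz => by
      have hza : z ≠ a := fun h => hz (h ▸ ha)
      have hyz : y ≠ z := fun h => hz (h ▸ hy)
      rw [G.adj_comm, hatt z hz y hy]
      simp [cliquesGluedAt, hy, hz, hza, hyz]
  ext y z
  by_cases hy : y ∈ K <;> by_cases hz : z ∈ K
  · exact ⟨fun h => ⟨h.ne, by tauto⟩, fun h => hK hy hz h.1⟩
  · exact hcross y hy z hz
  · rw [G.adj_comm, hcross z hz y hy, SimpleGraph.adj_comm]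
  · exact ⟨fun h => ⟨h.ne, by tauto⟩, fun h => hKc hy hz h.1⟩

variable [DecidableEq V]

/-- Every path outside `H` has all its attachments to `H` at a single vertex of `H`. For
`#H = n - k - 1` this means that `G` is contained in a member of `F_{n,k+1}`. -/
def SinglyAttached (G : SimpleGraph V) (H : Finset V) : Prop :=
  ∀ ⦃D u v p q⦄, PathOn G D u v → Disjoint H D → p ∈ H → q ∈ H → G.Adj u p → G.Adj v q → p = q

namespace ExtremalEar

lemma not_adj_of_notMem_base [Finite V] (h : ExtremalEar G B x a b)
    (h2 : ∀ z ∉ insert x B, 2 ≤ #(nbrsOn G (insert x B) z)) (hz : z ∉ B) (hy : y ∉ B) :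
    ¬ G.Adj z y := by
  have ha := mem_insert_of_mem (b := x) h.left_mem
  have hapex : ∀ w ∉ insert x B, ¬ G.Adj w x := fun w hw hwx => by
    obtain hxa | hxb := (h.outer_adj_iff hw (h2 w hw) (mem_insert_self x B)).1 hwx
    exacts [h.adj_left.ne hxa, h.adj_right.ne hxb]
  intro hzy
  obtain rfl | hzx := eq_or_ne z x
  · exact hapex y (by simp [hzy.ne', hy]) hzy.symm
  obtain rfl | hyx := eq_or_ne y x
  · exact hapex z (by simp [hzx, hz]) hzy
  have hzH : z ∉ insert x B := by simp [hzx, hz]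
  have hyH : y ∉ insert x B := by simp [hyx, hy]
  exact h.not_adj_of_two_nbrs hzH (h2 z hzH) hyH ha
    ((h.outer_adj_iff hyH (h2 y hyH) ha).2 (.inl rfl)) hzy

lemma adj_iff_of_notMem_base [Finite V] (h : ExtremalEar G B x a b)
    (h2 : ∀ z ∉ insert x B, 2 ≤ #(nbrsOn G (insert x B) z)) (hz : z ∉ B) :
    G.Adj z y ↔ y = a ∨ y = b := by
  by_cases hy : y ∈ B
  · obtain rfl | hzx := eq_or_ne z x
    · exact h.adj_iff y hy
    · have hzH : z ∉ insert x B := by simp [hzx, hz]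
      exact h.outer_adj_iff hzH (h2 z hzH) (mem_insert_of_mem hy)
  · refine iff_of_false (h.not_adj_of_notMem_base h2 hz hy) ?_
    rintro (rfl | rfl)
    exacts [hy h.left_mem, hy h.right_mem]

variable [Fintype V]

lemma two_le_card_nbrsOn_outer (h : ExtremalEar G B x a b) (hB : #B = s + 1)
    (hV : Fintype.card V = r + s + 1) (hmiss : #(edgesOn Gᶜ univ) ≤ r * s) (hu : u ∉ insert x B)
    (hu2 : 2 ≤ #(nbrsOn G (insert x B) u)) :
    (∀ z ∉ insert x B, 2 ≤ #(nbrsOn G (insert x B) z)) ∧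
      (r = 2 ∨ r = 3 ∧ #(edgesOn Gᶜ B) = 0) := by
  obtain ⟨A, R, hA, hR⟩ : ∃ A R : Finset V,
      (∀ z, z ∈ A ↔ z ∉ insert x B ∧ 2 ≤ #(nbrsOn G (insert x B) z)) ∧
      ∀ z, z ∈ R ↔ z ∉ insert x B ∧ #(nbrsOn G (insert x B) z) ≤ 1 :=
    ⟨univ.filter _, univ.filter _, fun _ => mem_filter_univ _, fun _ => mem_filter_univ _⟩
  have hAR : Disjoint A R := Finset.disjoint_left.2 fun z hzA hzR => by
    linarith [((hA z).1 hzA).2, ((hR z).1 hzR).2]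
  have hout : A ∪ R = (insert x B)ᶜ := by
    ext z
    rw [mem_union, hA, hR, mem_compl, ← and_or_left,
      and_iff_left ((le_or_gt 2 _).imp_right Nat.le_of_lt_succ)]
  have hcard : #A + #R + 1 = r := by
    have htotal := card_add_card_compl (insert x B)
    rw [← hout, card_union_of_disjoint hAR, h.card_insert] at htotal
    lia
  have hcount := h.choose_outer_add_le_one (fun z hz => ((hA z).1 hz).1)
    (fun z hz => ((hA z).1 hz).2) (fun z hz => ((hR z).1 hz).1) (fun z hz => ((hR z).1 hz).2) hAR hB
    (by rwa [union_assoc, hout, union_compl, hcard])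
  have hApos : 1 ≤ #A := card_pos.2 ⟨u, (hA u).2 ⟨hu, hu2⟩⟩
  have hR0 : #R = 0 := by nlinarith
  have hA2 : #A ≤ 2 := by
    by_contra! hlt
    have := Nat.choose_le_choose 2 hlt
    norm_num [Nat.choose] at this
    lia
  refine ⟨fun z hz => ?_, ?_⟩
  · have hzA : z ∈ A ∪ R := hout ▸ mem_compl.2 hz
    rw [card_eq_zero.1 hR0, union_empty] at hzA
    exact ((hA z).1 hzA).2
  · obtain hA1 | hA2 : #A = 1 ∨ #A = 2 := by lia
    · exact .inl (by lia)
    · rw [hA2, Nat.choose_self] at hcount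
      exact .inr (by lia)

lemma le_gammaOn (h : ExtremalEar G B x a b)
    (h2 : ∀ z ∉ insert x B, 2 ≤ #(nbrsOn G (insert x B) z)) : G ≤ gammaOn {a, b} Bᶜ := by
  intro y z hyz
  refine ⟨hyz.ne, ?_⟩
  simp only [mem_insert, mem_singleton, mem_compl, not_not]
  by_cases hy : y ∈ B
  · by_cases hz : z ∈ B
    · exact .inr (.inr ⟨hy, hz⟩)
    · exact .inl ((h.adj_iff_of_notMem_base h2 hz).1 hyz.symm)
  · exact .inr (.inl ((h.adj_iff_of_notMem_base h2 hy).1 hyz))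

lemma gammaOn_le (h : ExtremalEar G B x a b)
    (h2 : ∀ z ∉ insert x B, 2 ≤ #(nbrsOn G (insert x B) z)) (hB : G.IsClique B) :
    gammaOn {a, b} Bᶜ ≤ G := by
  have hend : ∀ y z, y = a ∨ y = b → y ≠ z → G.Adj y z := fun y z hy hyz => by
    by_cases hz : z ∈ B
    · have hyB : y ∈ B := by
        obtain rfl | rfl := hy
        exacts [h.left_mem, h.right_mem]
      exact hB hyB hz hyz
    · exact ((h.adj_iff_of_notMem_base h2 hz).2 hy).symm
  intro y z ⟨hyz, hyz'⟩
  simp only [mem_insert, mem_singleton, mem_compl, not_not] at hyz'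
  obtain hy | hz | ⟨hy, hz⟩ := hyz'
  · exact hend y z hy hyz
  · exact (hend z y hz hyz.symm).symm
  · exact hB hy hz hyz

end ExtremalEar

lemma exists_extremalEar (hB : 8 ≤ #B) (hmiss : #(edgesOn Gᶜ B) ≤ 1) (hx : x ∉ B)
    (hx2 : #(nbrsOn G B x) = 2) (hcycle : ∀ D, CycleOn G D → #D ≤ #B + 1) :
    ∃ a b, ExtremalEar G B x a b := by
  obtain ⟨a, b, hab, hnbrs⟩ := card_eq_two.1 hx2
  have hmem : ∀ y, y ∈ B ∧ G.Adj x y ↔ y = a ∨ y = b := fun y => by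
    rw [← mem_nbrsOn, hnbrs, mem_insert, mem_singleton]
  exact ⟨a, b, hB, hmiss, hx, ((hmem a).2 (.inl rfl)).1, ((hmem b).2 (.inr rfl)).1, hab,
    fun y hy => by rw [← hmem, and_iff_right hy], hcycle⟩

lemma card_edgesOn_compl_insert_le (hW : #(edgesOn Gᶜ W) = 0) (hv : v ∉ W)
    (hv2 : 2 ≤ #(nbrsOn G W v)) : #(edgesOn Gᶜ (insert v W)) + 2 ≤ #W := by
  have hdeg := card_nbrsOn_add_card_nbrsOn_compl G (mem_insert_self v W)
  rw [nbrsOn_insert_self, nbrsOn_insert_self, card_insert_of_notMem hv] at hdeg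
  rw [card_edgesOn_insert Gᶜ hv, hW]
  lia

lemma two_le_card_nbrsOn_insert (hW : #(edgesOn Gᶜ W) = 0) (h3 : 3 ≤ #W)
    (hv2 : 2 ≤ #(nbrsOn G W v)) : ∀ y ∈ insert v W, 2 ≤ #(nbrsOn G (insert v W) y) := by
  intro y hy
  obtain rfl | hy := mem_insert.1 hy
  · rwa [nbrsOn_insert_self]
  · have hdeg := card_le_card_nbrsOn_add_missing G hy
    have hmono := card_le_card (nbrsOn_mono (G := G) (subset_insert v W) y)
    lia

lemma exists_common_attachment [Finite V] (h6 : 6 ≤ #W) (hW : #(edgesOn Gᶜ W) = 0)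
    (hWc : G.IsClique (Wᶜ : Set V)) (hone : ∀ v ∉ W, #(nbrsOn G W v) = 1)
    (hcycle : ∀ D, CycleOn G D → #D ≤ #W + 1) (hu : u ∉ W) :
    ∃ a ∈ W, ∀ v ∉ W, ∀ y ∈ W, G.Adj v y ↔ y = a := by
  choose! f hf using fun v hv => card_eq_one.1 (hone v hv)
  have hmem : ∀ v ∉ W, ∀ y, y ∈ W ∧ G.Adj v y ↔ y = f v := fun v hv y => by
    rw [← mem_nbrsOn, hf v hv, mem_singleton]
  have hspec : ∀ v ∉ W, f v ∈ W ∧ G.Adj v (f v) := fun v hv => (hmem v hv _).2 rfl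
  have hconst : ∀ v ∉ W, f v = f u := fun v hv => by
    by_contra hne
    have huv : u ≠ v := fun h => hne (h ▸ rfl)
    have hpath : PathOn G W (f u) (f v) :=
      .of_card_missing_le_one h6 (by lia) hu (hspec u hu).1 (hspec v hv).1 (Ne.symm hne)
    obtain ⟨C, hC, hcard⟩ := hpath.exists_cycleOn_of_ear (.pair (hWc hu hv huv))
      (by simp [hu, hv]) (hspec u hu).2 (hspec v hv).2 (by lia)
    rw [card_pair huv] at hcard
    linarith [hcycle C hC]
  refine ⟨f u, (hspec u hu).1, fun v hv y hy => ?_⟩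
  rw [← hconst v hv, ← hmem v hv, and_iff_right hy]

/-- Up to isomorphism, `G` is a subgraph of `Γ_{n,2}` and `r = 2`, or is equal to `Γ_{n,3}` and
`r = 3`. These are the exceptional graphs in cases (c) and (d) of the theorem, with `r = k + 2`. -/
def GammaLike (G : SimpleGraph V) (r : ℕ) : Prop :=
  ∃ P I : Finset V, Disjoint P I ∧ #P = 2 ∧ #I = r ∧
    (r = 2 ∧ G ≤ gammaOn P I ∨ r = 3 ∧ G = gammaOn P I)

variable [Fintype V]

lemma ExtremalEar.gammaLike (h : ExtremalEar G B x a b) (hB : #B = s + 1)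
    (hV : Fintype.card V = r + s + 1) (hmiss : #(edgesOn Gᶜ univ) ≤ r * s) (hu : u ∉ insert x B)
    (hu2 : 2 ≤ #(nbrsOn G (insert x B) u)) : GammaLike G r := by
  obtain ⟨h2, hr⟩ := h.two_le_card_nbrsOn_outer hB hV hmiss hu hu2
  refine ⟨{a, b}, Bᶜ, ?_, card_pair h.ne, by rw [card_compl]; lia, ?_⟩
  · refine disjoint_compl_right.mono_left (insert_subset_iff.2 ?_)
    rw [singleton_subset_iff]
    exact ⟨h.left_mem, h.right_mem⟩
  · refine hr.imp (fun hr => ⟨hr, h.le_gammaOn h2⟩) fun ⟨hr, hB⟩ => ⟨hr, ?_⟩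
    exact (h.le_gammaOn h2).antisymm
      (h.gammaOn_le h2 (isClique_of_card_edgesOn_compl_eq_zero hB))

lemma singlyAttached_or_gammaLike (hs : 13 ≤ s) (hV : Fintype.card V = r + s + 1)
    (hmiss : #(edgesOn Gᶜ univ) ≤ r * s) (hcycle : ∀ D, CycleOn G D → #D ≤ s + 2)
    (hH : #H = s + 2) (hmissH : #(edgesOn Gᶜ H) ≤ s) (hdeg : ∀ v ∈ H, 2 ≤ #(nbrsOn G H v)) :
    SinglyAttached G H ∨ GammaLike G r := by
  by_cases hatt : SinglyAttached G H
  · exact .inl hatt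
  unfold SinglyAttached at hatt
  push Not at hatt
  obtain ⟨D, u, v, p, q, hD, hHD, hp, hq, hup, hvq, hpq⟩ := hatt
  have hu : u ∉ H := Finset.disjoint_right.1 hHD hD.left_mem
  have hn : ¬ PathOn G H p q := fun h => by
    obtain ⟨C, hC, hcard⟩ := h.exists_cycleOn_of_ear hD hHD hup hvq (by lia)
    linarith [hcycle C hC, card_pos.2 ⟨u, hD.left_mem⟩]
  obtain ⟨x, hx, hx2, hmissB⟩ :=
    exists_degree_eq_two_of_not_pathOn (by lia) (by lia) hdeg hu hp hq hpq hn
  have hB : #(H.erase x) = s + 1 := by rw [card_erase_of_mem hx, hH]; lia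
  rw [← insert_erase hx, nbrsOn_insert_self] at hx2
  obtain ⟨a, b, hear⟩ := exists_extremalEar (by lia) hmissB (notMem_erase x H) hx2
    (by rwa [hB])
  rw [← insert_erase hx] at hHD hp hq hu
  have hDone := hear.card_outer_path_le_one hD hHD hp hq hpq hup hvq
  obtain rfl : u = v := card_le_one.1 hDone u hD.left_mem v hD.right_mem
  exact .inr <| hear.gammaLike hB hV hmiss hu <|
    one_lt_card.2 ⟨p, mem_nbrsOn.2 ⟨hp, hup⟩, q, mem_nbrsOn.2 ⟨hq, hvq⟩, hpq⟩

lemma card_edgesOn_compl_eq_zero_and_card_nbrsOn_eq_one (hW : #W = s + 1)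
    (hV : Fintype.card V = r + s + 1) (hmiss : #(edgesOn Gᶜ univ) ≤ r * s)
    (hone : ∀ v ∉ W, #(nbrsOn G W v) ≤ 1) :
    #(edgesOn Gᶜ Wᶜ) = 0 ∧ ∀ v ∉ W, #(nbrsOn G W v) = 1 := by
  have hWc : #Wᶜ = r := by
    rw [card_compl]
    lia
  have htotal := card_edgesOn_add_card_edgesOn_compl G univ
  have hin := card_edgesOn_add_card_edgesOn_compl G W
  have hout := card_edgesOn_add_card_edgesOn_compl G Wᶜ
  have hle : ∀ v ∈ Wᶜ, #(nbrsOn G W v) ≤ 1 := fun v hv => hone v (mem_compl.1 hv)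
  have hsum : ∑ v ∈ Wᶜ, #(nbrsOn G W v) ≤ ∑ v ∈ Wᶜ, 1 := sum_le_sum hle
  rw [card_univ, hV, add_assoc, choose_two_add, ← union_compl W,
    card_edgesOn_union G disjoint_compl_right, union_compl] at htotal
  rw [hW] at hin
  rw [hWc] at hout
  have hr : ∑ v ∈ Wᶜ, 1 = r := by simp [hWc]
  refine ⟨by lia, fun v hv => ?_⟩
  exact (sum_eq_sum_iff_of_le hle).1 (by lia) v (mem_compl.2 hv)

lemma extremal_structure_of_clique (hs : 13 ≤ s) (hr : 1 ≤ r) (hV : Fintype.card V = r + s + 1)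
    (hmiss : #(edgesOn Gᶜ univ) ≤ r * s) (hcycle : ∀ D, CycleOn G D → #D ≤ s + 2)
    (hW : #W = s + 1) (hclique : #(edgesOn Gᶜ W) = 0) :
    (∃ H, #H = s + 2 ∧ SinglyAttached G H) ∨
      (∃ K a, #K = s + 1 ∧ a ∈ K ∧ G = cliquesGluedAt K a) ∨ GammaLike G r := by
  by_cases hex : ∃ v ∉ W, 2 ≤ #(nbrsOn G W v)
  · obtain ⟨v, hv, hv2⟩ := hex
    have hH : #(insert v W) = s + 2 := by rw [card_insert_of_notMem hv, hW]
    have hmissH := card_edgesOn_compl_insert_le hclique hv hv2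
    exact (singlyAttached_or_gammaLike hs hV hmiss hcycle hH (by lia)
      (two_le_card_nbrsOn_insert hclique (by lia) hv2)).imp (fun h => ⟨_, hH, h⟩) .inr
  · push Not at hex
    obtain ⟨hout, hone⟩ := card_edgesOn_compl_eq_zero_and_card_nbrsOn_eq_one hW hV hmiss
      fun v hv => Nat.le_of_lt_succ (hex v hv)
    have hWc : G.IsClique (Wᶜ : Set V) := by
      simpa only [coe_compl] using isClique_of_card_edgesOn_compl_eq_zero hout
    obtain ⟨u, hu⟩ : Wᶜ.Nonempty := card_pos.1 (by rw [card_compl]; lia)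
    obtain ⟨a, ha, hatt⟩ := exists_common_attachment (by lia) hclique hWc hone
      (by rwa [hW]) (mem_compl.1 hu)
    exact .inr (.inl ⟨W, a, hW, ha,
      eq_cliquesGluedAt (isClique_of_card_edgesOn_compl_eq_zero hclique) hWc ha hatt⟩)

lemma extremal_structure (hr : 2 ≤ r) (hs : 5 * r + 4 ≤ s) (hrs : r * (r + 3) + 4 ≤ 2 * s)
    (hV : Fintype.card V = r + s + 1) (hmiss : #(edgesOn Gᶜ univ) ≤ r * s)
    (hcycle : ∀ D, CycleOn G D → #D ≤ s + 2) :
    (∃ H, #H = s + 2 ∧ SinglyAttached G H) ∨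
      (∃ K a, #K = s + 1 ∧ a ∈ K ∧ G = cliquesGluedAt K a) ∨ GammaLike G r := by
  obtain ⟨t, -, H, -, hH, hmissH, hdeg, hcyc⟩ := exists_large_cycleOn hs hrs hV hmiss
  have hlong := hcycle H hcyc
  obtain rfl | rfl : t = 0 ∨ t = 1 := by lia
  · exact extremal_structure_of_clique (by lia) (by lia) hV hmiss hcycle
      (W := H) (by lia) (by lia)
  · have hH : #H = s + 2 := by lia
    exact (singlyAttached_or_gammaLike (by lia) hV hmiss hcycle hH (by lia) hdeg).imp
      (fun h => ⟨H, hH, h⟩) .inr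

end Extremal

section Relabelling

open Finset

lemma exists_perm_map_eq {V : Type*} [Finite V] {P I P' I' : Finset V}
    (h : Disjoint P I) (h' : Disjoint P' I') (hP : #P = #P') (hI : #I = #I') :
    ∃ e : Equiv.Perm V, P.map e.toEmbedding = P' ∧ I.map e.toEmbedding = I' := by
  classical
  cases nonempty_fintype V
  let e₀ : ↥(P ∪ I) ≃ ↥(P' ∪ I') := (Equiv.Finset.union P I h).symm.trans <|
    (Equiv.sumCongr (equivOfCardEq hP) (equivOfCardEq hI)).trans (Equiv.Finset.union P' I' h')
  refine ⟨e₀.extendSubtype, eq_of_subset_of_card_le ?_ (by simp [hP]),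
    eq_of_subset_of_card_le ?_ (by simp [hI])⟩
  · intro y hy
    obtain ⟨x, hx, rfl⟩ := mem_map.1 hy
    simp [e₀.extendSubtype_apply_of_mem x (mem_union_left I hx), e₀, hx]
  · intro y hy
    obtain ⟨x, hx, rfl⟩ := mem_map.1 hy
    have hsymm := Equiv.Finset.union_symm_right h hx (mem_union_right P hx)
    simp [e₀.extendSubtype_apply_of_mem x (mem_union_right P hx), e₀, hsymm]

variable {n t : ℕ} {G F : SimpleGraph (Fin n)} {K P I : Finset (Fin n)} {a : Fin n}

lemma exists_perm_initial_final (h : Disjoint P I) :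
    ∃ e : Equiv.Perm (Fin n), (∀ x, (e x).val < #P ↔ x ∈ P) ∧
      ∀ x, (e x).val < n - #I ↔ x ∉ I := by
  have hle : #P + #I ≤ n := by
    simpa [card_union_of_disjoint h] using card_le_univ (P ∪ I)
  let initial (m : ℕ) : Finset (Fin n) := {x | x.val < m}
  have hcard {m : ℕ} (hm : m ≤ n) : #(initial m) = m := by
    rw [Fin.card_filter_val_lt, min_eq_right hm]
  have hdisj : Disjoint (initial #P) (initial (n - #I))ᶜ := by
    refine disjoint_compl_right.mono_left fun x hx => ?_
    simp only [initial, mem_filter_univ] at hx ⊢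
    lia
  obtain ⟨e, heP, heI⟩ := exists_perm_map_eq h hdisj (hcard (by lia)).symm <| by
    rw [card_compl, hcard (by lia), Fintype.card_fin]
    lia
  refine ⟨e, fun x => ?_, fun x => ?_⟩
  · rw [← mem_map' e.toEmbedding, heP]
    simp [initial]
  · rw [← mem_map' e.toEmbedding, heI]
    simp only [initial, mem_compl, mem_filter_univ, Equiv.coe_toEmbedding, not_not]

lemma gammaGraph_adj {u v : Fin n} : (GammaGraph n t).Adj u v ↔
    u ≠ v ∧ (u.val < 2 ∨ v.val < 2 ∨ (u.val < n - t ∧ v.val < n - t)) := by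
  rw [GammaGraph, fromRel_adj]
  tauto

lemma lgraph_adj {u v : Fin n} : (Lgraph n t).Adj u v ↔
    u ≠ v ∧ (u.val = 0 ∨ v.val = 0 ∨ (u.val < n - t ↔ v.val < n - t)) := by
  rw [Lgraph, fromRel_adj]
  lia

lemma nonempty_gammaOn_iso (h : Disjoint P I) (hP : #P = 2) :
    Nonempty (gammaOn P I ≃g GammaGraph n #I) := by
  obtain ⟨e, heP, heI⟩ := exists_perm_initial_final h
  refine ⟨e, fun {u v} => ?_⟩
  rw [hP] at heP
  simp only [gammaGraph_adj, heP, heI, gammaOn, ne_eq, e.apply_eq_iff_eq]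

lemma nonempty_cliquesGluedAt_iso (ha : a ∈ K) :
    Nonempty (cliquesGluedAt K a ≃g Lgraph n (n - #K)) := by
  have hdisj : Disjoint {a} Kᶜ := by simpa using ha
  obtain ⟨e, hea, heK⟩ := exists_perm_initial_final hdisj
  refine ⟨e, fun {u v} => ?_⟩
  simp only [card_singleton, Nat.lt_one_iff, mem_singleton, card_compl, Fintype.card_fin,
    mem_compl, not_not] at hea heK
  simp only [lgraph_adj, hea, heK, cliquesGluedAt, ne_eq, e.apply_eq_iff_eq]

lemma isSubgraphOf_of_le_of_iso {G' : SimpleGraph (Fin n)} (hle : G ≤ G') (e : G' ≃g F) :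
    IsSubgraphOf G F :=
  ⟨e.toHom.comp (.ofLE hle), e.injective⟩

lemma GammaLike.isSubgraphOf_or_nonempty_iso {r : ℕ} (h : GammaLike G r) :
    (r = 2 ∧ IsSubgraphOf G (GammaGraph n 2)) ∨
      (r = 3 ∧ Nonempty (G ≃g GammaGraph n 3)) := by
  obtain ⟨P, I, hPI, hP, hI, h⟩ := h
  obtain ⟨e⟩ := nonempty_gammaOn_iso hPI hP
  obtain ⟨rfl, hle⟩ | ⟨rfl, rfl⟩ := h
  · rw [hI] at e
    exact .inl ⟨rfl, isSubgraphOf_of_le_of_iso hle e⟩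
  · rw [hI] at e
    exact .inr ⟨rfl, ⟨e⟩⟩

end Relabelling

section Attachments

open Finset

variable {V : Type*} {G : SimpleGraph V} {H : Finset V} {u v : V}

lemma exists_pathOn_of_reachable_induce [DecidableEq V] {u v : {x | x ∉ H}}
    (h : (G.induce {x | x ∉ H}).Reachable u v) : ∃ D, PathOn G D u v ∧ Disjoint H D := by
  obtain ⟨w, hw⟩ := h.exists_isPath
  let ι := Embedding.induce (G := G) {x | x ∉ H}
  refine ⟨_, .of_walk (w.map ι.toHom) (hw.map ι.injective), Finset.disjoint_right.2 fun x hx => ?_⟩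
  rw [List.mem_toFinset, Walk.support_map, List.mem_map] at hx
  obtain ⟨y, -, rfl⟩ := hx
  exact y.2

/-- The graph whose cliques are `H` and the fibres of `f`. For a retraction `f` onto `H`, each
component outside `H` is a clique, and its only neighbour in `H` is its image under `f`. -/
def retractGraph (H : Finset V) (f : V → V) : SimpleGraph V where
  Adj x y := x ≠ y ∧ (x ∈ H ∧ y ∈ H ∨ f x = f y)
  symm := ⟨fun _ _ h => ⟨h.1.symm, h.2.imp And.symm Eq.symm⟩⟩
  loopless := ⟨fun _ h => h.1 rfl⟩

lemma eq_of_reachable_induce_retractGraph {f : V → V} {u v : {x | x ∉ H}}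
    (h : ((retractGraph H f).induce {x | x ∉ H}).Reachable u v) : f u = f v := by
  obtain ⟨w⟩ := h
  induction w with
  | nil => rfl
  | @cons x y z hxy _ ih => exact (hxy.2.resolve_left fun h => x.2 h.1).trans ih

lemma memF_retractGraph {n k : ℕ} {H : Finset (Fin n)} {f : Fin n → Fin n} (hH : #H = n - k)
    (hf : ∀ x, f x ∈ H) (hfH : ∀ x ∈ H, f x = x) : MemF n k (retractGraph H f) := by
  have hadj {u w : Fin n} (hu : u ∉ H) (hw : w ∈ H) : (retractGraph H f).Adj u w ↔ w = f u := by
    simp [retractGraph, hu, hfH w hw, ne_of_mem_of_not_mem hw hu |>.symm, eq_comm]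
  refine ⟨H, hH, fun x hx y hy hxy => ⟨hxy, .inl ⟨hx, hy⟩⟩, fun u v huv => ?_, fun u => ?_,
    fun u v huv w hw => ?_⟩
  · exact or_iff_not_imp_left.2 fun hne =>
      ⟨fun h => hne (Subtype.ext h), .inr (eq_of_reachable_induce_retractGraph huv)⟩
  · exact ⟨f u, ⟨hf u, (hadj u.2 (hf u)).2 rfl⟩, fun w ⟨hw, huw⟩ => (hadj u.2 hw).1 huw⟩
  · rw [hadj u.2 hw, hadj v.2 hw, eq_of_reachable_induce_retractGraph huv]
    exact id

lemma SinglyAttached.exists_le_retractGraph [DecidableEq V] (h : SinglyAttached G H)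
    (hH : H.Nonempty) :
    ∃ f : V → V, (∀ x, f x ∈ H) ∧ (∀ x ∈ H, f x = x) ∧ G ≤ retractGraph H f := by
  have hanchor (c : (G.induce {x | x ∉ H}).ConnectedComponent) :
      ∃ w ∈ H, ∀ u, connectedComponentMk _ u = c → ∀ p ∈ H, G.Adj u p → p = w := by
    by_cases hc : ∃ u, connectedComponentMk _ u = c ∧ ∃ p ∈ H, G.Adj u p
    · obtain ⟨u, rfl, p, hp, hup⟩ := hc
      refine ⟨p, hp, fun v hv q hq hvq => ?_⟩
      obtain ⟨D, hD, hHD⟩ := exists_pathOn_of_reachable_induce (ConnectedComponent.exact hv)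
      exact h hD hHD hq hp hvq hup
    · obtain ⟨w, hw⟩ := hH
      exact ⟨w, hw, fun u hu p hp hup => (hc ⟨u, hu, p, hp, hup⟩).elim⟩
  choose g hg hgatt using hanchor
  classical
  let f (x : V) : V := if hx : x ∈ H then x else g (connectedComponentMk _ ⟨x, hx⟩)
  have hfH : ∀ x ∈ H, f x = x := fun x hx => dif_pos hx
  have hfout {x : V} (hx : x ∉ H) : f x = g (connectedComponentMk _ ⟨x, hx⟩) := dif_neg hx
  have hatt {x y : V} (hx : x ∉ H) (hy : y ∈ H) (hxy : G.Adj x y) : f x = f y := by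
    rw [hfout hx, hfH y hy]
    exact (hgatt _ ⟨x, hx⟩ rfl y hy hxy).symm
  refine ⟨f, fun x => ?_, hfH, fun x y hxy => ⟨hxy.ne, ?_⟩⟩
  · by_cases hx : x ∈ H
    · rwa [hfH x hx]
    · exact hfout hx ▸ hg _
  · by_cases hx : x ∈ H <;> by_cases hy : y ∈ H
    · exact .inl ⟨hx, hy⟩
    · exact .inr (hatt hy hx hxy.symm).symm
    · exact .inr (hatt hx hy hxy)
    · refine .inr ?_
      rw [hfout hx, hfout hy, ConnectedComponent.sound (Adj.reachable _)]
      exact hxy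

lemma SinglyAttached.exists_memF {n k : ℕ} {G : SimpleGraph (Fin n)} {H : Finset (Fin n)}
    (h : SinglyAttached G H) (hH : #H = n - k) (hne : H.Nonempty) :
    ∃ F : SimpleGraph (Fin n), MemF n k F ∧ IsSubgraphOf G F := by
  obtain ⟨f, hf, hfH, hle⟩ := h.exists_le_retractGraph hne
  exact ⟨_, memF_retractGraph hH hf hfH, isSubgraphOf_of_le_of_iso hle .refl⟩

end Attachments

section Circumference

open Finset

variable {V : Type} {G : SimpleGraph V} {l r s : ℕ}

lemma card_edgesOn_univ [Fintype V] (G : SimpleGraph V) : #(edgesOn G univ) = edgeCount G := by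
  classical
  rw [edgeCount, Nat.card_eq_fintype_card, ← edgeFinset_card]
  congr 1
  ext e
  simp [mem_edgesOn]

lemma card_edgesOn_compl_univ_le [Fintype V] (hV : Fintype.card V = r + s + 1)
    (he : (s + 1).choose 2 + (r + 1).choose 2 ≤ edgeCount G) :
    #(edgesOn Gᶜ univ) ≤ r * s := by
  classical
  have htotal := card_edgesOn_add_card_edgesOn_compl G univ
  rw [card_edgesOn_univ, card_univ, hV, add_assoc, choose_two_add] at htotal
  have hr := choose_two_add r 1
  rw [Nat.choose_eq_zero_of_lt one_lt_two] at hr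
  lia

lemma bddAbove_hasCycleLen [Finite V] (G : SimpleGraph V) : BddAbove {l | HasCycleLen G l} := by
  classical
  cases nonempty_fintype V
  refine ⟨Fintype.card V, fun l hl => ?_⟩
  obtain ⟨W, -, rfl⟩ := hasCycleLen_iff.1 hl
  exact card_le_univ W

lemma HasCycleLen.le_circumference [Finite V] (h : HasCycleLen G l) : l ≤ circumference G :=
  le_csSup (bddAbove_hasCycleLen G) h

lemma HasCycleLen.circumference [Finite V] (h : HasCycleLen G l) :
    HasCycleLen G (circumference G) :=
  Nat.sSup_mem ⟨l, h⟩ (bddAbove_hasCycleLen G)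

lemma weaklyPancyclic3_of_card_missing_le [Fintype V] (hs : 5 * r + 4 ≤ s)
    (hrs : r * (r + 3) + 4 ≤ 2 * s) (hV : Fintype.card V = r + s + 1)
    (hmiss : #(edgesOn Gᶜ univ) ≤ r * s) : WeaklyPancyclic3 G := by
  classical
  obtain ⟨t, -, H, -, hH, -, -, hcyc⟩ := exists_large_cycleOn hs hrs hV hmiss
  have hlen : HasCycleLen G #H := hasCycleLen_iff.2 ⟨H, hcyc, rfl⟩
  have hlong : s + 1 ≤ circumference G := by
    have := hlen.le_circumference
    lia
  obtain ⟨W, hW, hWcard⟩ := hasCycleLen_iff.1 hlen.circumference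
  have hpan : ∀ l, 3 ≤ l → l ≤ circumference G → HasCycleLen G l := fun l hl hlc =>
    hasCycleLen_iff.2 <| exists_cycleOn_card_eq (by lia)
      ((card_le_card (edgesOn_mono (subset_univ W))).trans hmiss) hW (by lia) hl (by lia)
  exact ⟨hpan 3 le_rfl (by lia), hpan⟩

end Circumference

/-- Stability version of Woodall's theorem (Theorem 1.4). -/
theorem woodall_stability (k n : ℕ) (G : SimpleGraph (Fin n))
    (hn1 : 6 * k + 17 ≤ n) (hn2 : (k + 4) * (k + 5) / 2 ≤ n)
    (he : (n - k - 2).choose 2 + (k + 3).choose 2 ≤ edgeCount G) :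
    WeaklyPancyclic3 G ∧
      (¬ HasCycleLen G (n - k) →
        (∃ F : SimpleGraph (Fin n), MemF n (k + 1) F ∧ IsSubgraphOf G F) ∨
        Nonempty (G ≃g Lgraph n (k + 2)) ∨
        (k = 0 ∧ IsSubgraphOf G (GammaGraph n 2)) ∨
        (k = 1 ∧ Nonempty (G ≃g GammaGraph n 3))) := by
  obtain ⟨s, rfl⟩ : ∃ s, n = k + 2 + s + 1 := ⟨n - (k + 3), by lia⟩
  have hcard : Fintype.card (Fin (k + 2 + s + 1)) = k + 2 + s + 1 := Fintype.card_fin _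
  have hs : 5 * (k + 2) + 4 ≤ s := by lia
  have hrs : (k + 2) * (k + 2 + 3) + 4 ≤ 2 * s := by
    have heven : 2 * ((k + 4) * (k + 5) / 2) = (k + 4) * (k + 5) :=
      Nat.two_mul_div_two_of_even (Nat.even_mul_succ_self (k + 4))
    linarith
  have hmiss := card_edgesOn_compl_univ_le hcard <| by
    rwa [show k + 2 + s + 1 - k - 2 = s + 1 by lia] at he
  have hpan := weaklyPancyclic3_of_card_missing_le hs hrs hcard hmiss
  refine ⟨hpan, fun hno => ?_⟩
  have hcycle (D) (hD : CycleOn G D) : D.card ≤ s + 2 := by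
    have hle := (hasCycleLen_iff.2 ⟨D, hD, rfl⟩).le_circumference
    by_contra hlt
    exact hno (hpan.2 _ (by lia) (by lia))
  obtain ⟨H, hH, hatt⟩ | ⟨K, a, hK, ha, rfl⟩ | hgamma :=
    extremal_structure (by lia) hs hrs hcard hmiss hcycle
  · exact .inl (hatt.exists_memF (by lia) (Finset.card_pos.1 (by lia)))
  · refine .inr (.inl ?_)
    simpa [hK] using nonempty_cliquesGluedAt_iso ha
  · exact .inr (.inr (hgamma.isSubgraphOf_or_nonempty_iso.imp
      (.imp_left (by lia)) (.imp_left (by lia))))
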